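/- arXiv:1102.2883 — 3 statements merged into one kernel-verified Lean document; each statement's English description precedes it below -/
import Mathlib

section
/- Let κ ∈ ℤ_{>0} ∪ {∞} and let n, r be integers with n > 0 and 0 ≤ r ≤ nκ. Then lim_{s→∞} (1/s) ln (sn choose sr)_κ = n·H^max_κ(r/n). -/
open Real Filter Finset

noncomputable section

/-- `ω(n) = n^n / n!`. -/
def omegaFn (n : ℕ) : ℝ := (n : ℝ) ^ n / (n.factorial : ℝ)

/-- `Ω(V)`: the sum of `ω(v)` over the entries of a vector `V`. -/
def OmegaVec {I : Type*} [Fintype I] (V : I → ℕ) : ℝ := ∑ i, omegaFn (V i)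

/-- `Ω(K)`: the sum of `ω(k)` over the entries of a matrix `K`. -/
def OmegaMat {I J : Type*} [Fintype I] [Fintype J] (K : I → J → ℕ) : ℝ :=
  ∑ i, ∑ j, omegaFn (K i j)

/-- `T_K(R,C)`: the number of nonnegative-integer matrices with row sums `R`,
column sums `C`, and entries bounded by `K` (a bound of `⊤` means unbounded). -/
def tableCount {I J : Type*} [Fintype I] [Fintype J]
    (K : I → J → ℕ∞) (R : I → ℕ) (C : J → ℕ) : ℕ :=
  Set.ncard {A : I → J → ℕ |
    (∀ i, ∑ j, A i j = R i) ∧ (∀ j, ∑ i, A i j = C j) ∧ ∀ i j, (A i j : ℕ∞) ≤ K i j}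

/-- The `s`-fold cloning of a margin vector. -/
def cloneVec {m : ℕ} (s : ℕ) (R : Fin m → ℕ) : Fin s × Fin m → ℕ :=
  fun p => s * R p.2

/-- The `s`-fold cloning of a bound matrix. -/
def cloneMat {m n : ℕ} (s : ℕ) (K : Fin m → Fin n → ℕ∞) :
    Fin s × Fin m → Fin s × Fin n → ℕ∞ :=
  fun p q => K p.2 q.2

/-- The mean of the truncated geometric distribution on `{0,…,κ}` with ratio `q`. -/
def tgMean (κ : ℕ∞) (q : ℝ) : ℝ :=
  if κ = ⊤ then q / (1 - q)
  else (∑ t ∈ Finset.range (κ.toNat + 1), (t : ℝ) * q ^ t) /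
    (∑ t ∈ Finset.range (κ.toNat + 1), q ^ t)

/-- The parameter `q(x;κ)` of the truncated geometric distribution `TG(x;κ)` with mean `x`. -/
def tgQ (κ : ℕ∞) (x : ℝ) : ℝ := sInf {q : ℝ | 0 ≤ q ∧ x ≤ tgMean κ q}

/-- The parameter `p(x;κ)` of the truncated geometric distribution `TG(x;κ)` with mean `x`. -/
def tgP (κ : ℕ∞) (x : ℝ) : ℝ :=
  if κ = ⊤ then 1 - tgQ κ x
  else (∑ t ∈ Finset.range (κ.toNat + 1), tgQ κ x ^ t)⁻¹

/-- The probability mass function of `TG(x;κ)`: `Pr[X=t] = p q^t` for `t ∈ {0,…,κ}`. -/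
def tgPMF (κ : ℕ∞) (x : ℝ) (t : ℕ) : ℝ :=
  if (t : ℕ∞) ≤ κ then tgP κ x * tgQ κ x ^ t else 0

/-- `H^max_κ(x)`: the (base-e) entropy of the truncated geometric distribution `TG(x;κ)`. -/
def Hmax (κ : ℕ∞) (x : ℝ) : ℝ := -∑' t : ℕ, tgPMF κ x t * Real.log (tgPMF κ x t)

/-- The `(κ+1)`-nomial coefficient `(n choose r)_κ`: the coefficient of `x^r` in
`(1+x+⋯+x^κ)^n`; for `κ = ∞` it is `(r+n-1).choose r`. -/
def knomial (κ : ℕ∞) (n r : ℕ) : ℕ :=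
  if κ = ⊤ then (r + n - 1).choose r
  else ((∑ t ∈ Finset.range (κ.toNat + 1), (Polynomial.X : Polynomial ℕ) ^ t) ^ n).coeff r

/-- The independence-heuristic estimate `I_κ(R,C)`. -/
def indepEst (κ : ℕ∞) {I J : Type*} [Fintype I] [Fintype J] (R : I → ℕ) (C : J → ℕ) : ℝ :=
  ((knomial κ (Fintype.card I * Fintype.card J) (∑ i, R i) : ℝ))⁻¹ *
    (∏ i, (knomial κ (Fintype.card J) (R i) : ℝ)) *
    ∏ j, (knomial κ (Fintype.card I) (C j) : ℝ)

/-- The transportation polytope `Π_κ(R,C)` of real matrices with entries in `[0,κ]`,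
row sums `R` and column sums `C`. -/
def transportPolytope (κ : ℕ∞) {m n : ℕ} (R : Fin m → ℕ) (C : Fin n → ℕ) :
    Set (Fin m → Fin n → ℝ) :=
  {Z | (∀ i j, 0 ≤ Z i j) ∧ (∀ i j, κ ≠ ⊤ → Z i j ≤ (κ.toNat : ℝ)) ∧
    (∀ i, ∑ j, Z i j = (R i : ℝ)) ∧ ∀ j, ∑ i, Z i j = (C j : ℝ)}

/-- The generating function `G(x,y) = ∏_{i,j} (1 + x_i y_j + ⋯ + (x_i y_j)^{k_{ij}})`. -/
def genFun {m n : ℕ} (K : Fin m → Fin n → ℕ) (x : Fin m → ℝ) (y : Fin n → ℝ) : ℝ :=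
  ∏ i, ∏ j, ∑ t ∈ Finset.range (K i j + 1), (x i * y j) ^ t

/-- The monomial `x^R = ∏_i x_i^{r_i}`. -/
def monom {m : ℕ} (x : Fin m → ℝ) (R : Fin m → ℕ) : ℝ := ∏ i, x i ^ R i

/-- The concave roof function `f_K(R,C)`: the supremum of `∑_t α_t ln T_K(R^t,C^t)` over
convex combinations of integer margins averaging to `(R,C)` (and `⊥ = -∞` if none exist). -/
def fK {m n : ℕ} (K : Fin m → Fin n → ℕ) (R : Fin m → ℝ) (C : Fin n → ℝ) : EReal :=
  sSup {v : EReal | ∃ (p : ℕ) (α : Fin p → ℝ)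
    (Rs : Fin p → Fin m → ℕ) (Cs : Fin p → Fin n → ℕ),
    1 ≤ p ∧ (∀ t, 0 ≤ α t) ∧ ∑ t, α t = 1 ∧
    (∀ i, ∑ t, α t * (Rs t i : ℝ) = R i) ∧ (∀ j, ∑ t, α t * (Cs t j : ℝ) = C j) ∧
    (∀ t, 0 < tableCount (fun i j => (K i j : ℕ∞)) (Rs t) (Cs t)) ∧
    v = ((∑ t, α t * Real.log (tableCount (fun i j => (K i j : ℕ∞)) (Rs t) (Cs t)) : ℝ) : EReal)}

/-- `e^x` for an extended real `x`, with `e^{-∞} = 0`. -/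
def expE (e : EReal) : ℝ := if e = ⊥ then 0 else Real.exp e.toReal

end

namespace Polynomial

/-- The Euler derivation `p ↦ X p'`. -/
noncomputable def eulerDeriv (p : Polynomial ℝ) : Polynomial ℝ := X * derivative p

lemma coeff_eulerDeriv (p : Polynomial ℝ) (j : ℕ) : (eulerDeriv p).coeff j = j * p.coeff j := by
  cases j with
  | zero => simp [eulerDeriv]
  | succ j => rw [eulerDeriv, coeff_X_mul, coeff_derivative]; push_cast; ring

lemma eulerDeriv_mul (p q : Polynomial ℝ) :
    eulerDeriv (p * q) = eulerDeriv p * q + p * eulerDeriv q := by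
  simp only [eulerDeriv, derivative_mul]; ring

lemma eulerDeriv_add (p q : Polynomial ℝ) : eulerDeriv (p + q) = eulerDeriv p + eulerDeriv q := by
  simp only [eulerDeriv, derivative_add]; ring

lemma natDegree_eulerDeriv_le (p : Polynomial ℝ) : (eulerDeriv p).natDegree ≤ p.natDegree := by
  rw [natDegree_le_iff_coeff_eq_zero]
  intro j hj
  rw [coeff_eulerDeriv, coeff_eq_zero_of_natDegree_lt hj, mul_zero]

lemma eval_eulerDeriv_pow {p : Polynomial ℝ} {q x : ℝ} (h : (eulerDeriv p).eval q = x * p.eval q)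
    (N : ℕ) : (eulerDeriv (p ^ N)).eval q = N * x * p.eval q ^ N := by
  induction N with
  | zero => simp [eulerDeriv]
  | succ N ih =>
    rw [pow_succ, eulerDeriv_mul, eval_add, eval_mul, eval_mul, ih, h, eval_pow]
    push_cast; ring

lemma eval_eulerDeriv_eulerDeriv_pow {p : Polynomial ℝ} {q x v : ℝ}
    (h : (eulerDeriv p).eval q = x * p.eval q)
    (h2 : (eulerDeriv (eulerDeriv p)).eval q = (x ^ 2 + v) * p.eval q) (N : ℕ) :
    (eulerDeriv (eulerDeriv (p ^ N))).eval q = (N ^ 2 * x ^ 2 + N * v) * p.eval q ^ N := by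
  induction N with
  | zero => simp [eulerDeriv]
  | succ N ih =>
    simp only [pow_succ p, eulerDeriv_mul, eulerDeriv_add, eval_add, eval_mul, ih, h, h2,
      eval_pow, eval_eulerDeriv_pow h]
    push_cast; ring

/-- The variance of a sum of `N` independent variables, in terms of generating functions. -/
lemma sum_coeff_pow_mul_sub_sq {p : Polynomial ℝ} {q x v : ℝ}
    (h : (eulerDeriv p).eval q = x * p.eval q)
    (h2 : (eulerDeriv (eulerDeriv p)).eval q = (x ^ 2 + v) * p.eval q) {N d : ℕ}
    (hd : (p ^ N).natDegree < d) :
    ∑ j ∈ range d, (p ^ N).coeff j * q ^ j * ((j : ℝ) - N * x) ^ 2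
      = N * v * p.eval q ^ N := by
  have e0 := eval_eq_sum_range' hd q
  have hd1 := (natDegree_eulerDeriv_le (p ^ N)).trans_lt hd
  have e1 := eval_eq_sum_range' hd1 q
  have e2 := eval_eq_sum_range' ((natDegree_eulerDeriv_le _).trans_lt hd1) q
  rw [eval_eulerDeriv_pow h] at e1
  rw [eval_eulerDeriv_eulerDeriv_pow h h2] at e2
  simp only [coeff_eulerDeriv] at e1 e2
  rw [eval_pow] at e0
  have : ∀ j ∈ range d, (p ^ N).coeff j * q ^ j * ((j : ℝ) - N * x) ^ 2
      = (j * (j * (p ^ N).coeff j)) * q ^ j - 2 * N * x * (j * (p ^ N).coeff j * q ^ j)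
        + N ^ 2 * x ^ 2 * ((p ^ N).coeff j * q ^ j) := fun j _ => by ring
  rw [sum_congr rfl this, sum_add_distrib, sum_sub_distrib, ← mul_sum, ← mul_sum, ← e0, ← e1,
    ← e2]
  ring

/-- Chebyshev's inequality, combined with the pigeonhole principle: some coefficient of `p ^ N`
close to the mean carries a non-negligible part of the mass of `p ^ N` at `q`. -/
lemma exists_coeff_pow_large {p : Polynomial ℝ} {q x v : ℝ} (hq : 0 < q) (hp : 0 < p.eval q)
    (hc : ∀ N j, 0 ≤ (p ^ N).coeff j)
    (h : (eulerDeriv p).eval q = x * p.eval q)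
    (h2 : (eulerDeriv (eulerDeriv p)).eval q = (x ^ 2 + v) * p.eval q) {N d : ℕ} {c : ℝ}
    (hd : (p ^ N).natDegree < d) (hc0 : 0 < c) (hN : 2 * (N * v) ≤ c ^ 2) :
    ∃ j < d, |(j : ℝ) - N * x| ≤ c ∧ p.eval q ^ N ≤ 2 * d * ((p ^ N).coeff j * q ^ j) := by
  have hd0 : (0 : ℝ) < d := by exact_mod_cast (Nat.zero_le _).trans_lt hd
  have e0 := eval_eq_sum_range' hd q
  rw [eval_pow] at e0
  have hE : 0 < p.eval q ^ N := pow_pos hp N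
  have key : ∑ _j ∈ range d, (c ^ 2 * p.eval q ^ N / (2 * d)) ≤
      ∑ j ∈ range d, ((p ^ N).coeff j * q ^ j) * (c ^ 2 - ((j : ℝ) - N * x) ^ 2) := by
    simp only [mul_sub, sum_sub_distrib, ← sum_mul]
    rw [← e0, sum_coeff_pow_mul_sub_sq h h2 hd, sum_const, card_range, nsmul_eq_mul]
    have : (d : ℝ) * (c ^ 2 * p.eval q ^ N / (2 * d)) = c ^ 2 / 2 * p.eval q ^ N := by
      field_simp
    rw [this]
    nlinarith
  obtain ⟨j, hj, hle⟩ := Finset.exists_le_of_sum_le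
    (by rw [nonempty_range_iff]; exact (Nat.zero_le _).trans_lt hd |>.ne') key
  have hb : 0 ≤ (p ^ N).coeff j * q ^ j := mul_nonneg (hc _ _) (pow_pos hq j).le
  have hlpos : 0 < c ^ 2 * p.eval q ^ N / (2 * d) := by positivity
  refine ⟨j, mem_range.1 hj, ?_, ?_⟩
  · refine abs_le_of_sq_le_sq ?_ hc0.le
    by_contra! hlt
    nlinarith
  · have : c ^ 2 * p.eval q ^ N / (2 * d) ≤ (p ^ N).coeff j * q ^ j * c ^ 2 :=
      hle.trans (mul_le_mul_of_nonneg_left (by nlinarith [sq_nonneg ((j : ℝ) - N * x)]) hb)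
    rw [div_le_iff₀ (by positivity)] at this
    have hc2 : 0 < c ^ 2 := by positivity
    nlinarith

end Polynomial

/-- The polynomial `1 + X + ⋯ + X ^ k`. -/
noncomputable def geomPoly (R : Type*) [Semiring R] (k : ℕ) : Polynomial R :=
  ∑ t ∈ range (k + 1), Polynomial.X ^ t

lemma knomial_coe (k N j : ℕ) : knomial k N j = (geomPoly ℕ k ^ N).coeff j := by
  simp [knomial, geomPoly]

lemma natDegree_geomPoly_le (R : Type*) [Semiring R] (k : ℕ) : (geomPoly R k).natDegree ≤ k := by
  refine Polynomial.natDegree_sum_le_of_forall_le _ _ fun t ht => ?_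
  exact (Polynomial.natDegree_X_pow_le t).trans (Nat.lt_succ_iff.1 (mem_range.1 ht))

lemma natDegree_geomPoly_pow_lt (R : Type*) [Semiring R] (k N : ℕ) :
    (geomPoly R k ^ N).natDegree < N * k + 1 :=
  Nat.lt_succ_iff.2 (Polynomial.natDegree_pow_le_of_le N (natDegree_geomPoly_le R k))

lemma coeff_geomPoly (R : Type*) [Semiring R] {k t : ℕ} (ht : t ≤ k) :
    (geomPoly R k).coeff t = 1 := by
  simp [geomPoly, Polynomial.coeff_X_pow, Nat.lt_succ_iff.2 ht]

lemma eval_geomPoly (k : ℕ) (q : ℝ) :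
    (geomPoly ℝ k).eval q = ∑ t ∈ range (k + 1), q ^ t := by
  simp [geomPoly, Polynomial.eval_finsetSum]

lemma eval_eulerDeriv_geomPoly (k : ℕ) (q : ℝ) :
    (Polynomial.eulerDeriv (geomPoly ℝ k)).eval q = ∑ t ∈ range (k + 1), (t : ℝ) * q ^ t := by
  rw [Polynomial.eval_eq_sum_range' (Nat.lt_succ_iff.2
    ((Polynomial.natDegree_eulerDeriv_le _).trans (natDegree_geomPoly_le ℝ k)))]
  refine sum_congr rfl fun t ht => ?_
  rw [Polynomial.coeff_eulerDeriv, coeff_geomPoly ℝ (Nat.lt_succ_iff.1 (mem_range.1 ht)), mul_one]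

lemma coeff_geomPoly_pow_real (k N j : ℕ) :
    (geomPoly ℝ k ^ N).coeff j = (knomial k N j : ℝ) := by
  have : geomPoly ℝ k = (geomPoly ℕ k).map (Nat.castRingHom ℝ) := by
    simp [geomPoly, Polynomial.map_sum]
  rw [this, ← Polynomial.map_pow, Polynomial.coeff_map, knomial_coe]
  simp

lemma sum_pow_pos (k : ℕ) {q : ℝ} (hq : 0 ≤ q) : 0 < ∑ t ∈ range (k + 1), q ^ t := by
  rw [sum_range_succ']
  have := sum_nonneg fun t (_ : t ∈ range k) => pow_nonneg hq (t + 1)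
  simp only [pow_zero]
  linarith

lemma knomial_mul_le (k N M i j : ℕ) :
    knomial k N i * knomial k M j ≤ knomial k (N + M) (i + j) := by
  simp only [knomial_coe, pow_add, Polynomial.coeff_mul]
  exact single_le_sum (f := fun x : ℕ × ℕ =>
    (geomPoly ℕ k ^ N).coeff x.1 * (geomPoly ℕ k ^ M).coeff x.2) (fun _ _ => Nat.zero_le _)
    (mem_antidiagonal.2 (show (i, j).1 + (i, j).2 = i + j from rfl))

lemma knomial_pos (k : ℕ) : ∀ N j : ℕ, j ≤ N * k → 0 < knomial k N j
  | 0, j, h => by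
    obtain rfl : j = 0 := by omega
    simp [knomial_coe]
  | N + 1, j, h => by
    rw [add_mul, one_mul] at h
    have h1 : 0 < knomial k N (j - min j k) := knomial_pos k N _ (by omega)
    have h2 : knomial k 1 (min j k) = 1 := by
      rw [knomial_coe, pow_one, coeff_geomPoly ℕ (min_le_right _ _)]
    have h3 := knomial_mul_le k N 1 (j - min j k) (min j k)
    rw [h2, mul_one, Nat.sub_add_cancel (min_le_left _ _)] at h3
    exact h1.trans_le h3

lemma knomial_zero_right (k N : ℕ) : knomial k N 0 = 1 := by
  rw [knomial_coe, Polynomial.coeff_zero_eq_eval_zero, Polynomial.eval_pow,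
    ← Polynomial.coeff_zero_eq_eval_zero, coeff_geomPoly ℕ (Nat.zero_le _), one_pow]

lemma knomial_mul_self (k N : ℕ) : knomial k N (N * k) = 1 := by
  rw [knomial_coe, Polynomial.coeff_pow_of_natDegree_le (natDegree_geomPoly_le ℕ k),
    coeff_geomPoly ℕ le_rfl, one_pow]

lemma knomial_one (N j : ℕ) : knomial 1 N j = N.choose j := by
  have := knomial_coe 1 N j
  rw [Nat.cast_one] at this
  rw [this, geomPoly, sum_range_succ, sum_range_one, pow_zero, pow_one,
    Polynomial.coeff_one_add_X_pow, Nat.cast_id]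

lemma knomial_mul_pow_le {k N j : ℕ} (hj : j ≤ N * k) {q : ℝ} (hq : 0 ≤ q) :
    (knomial k N j : ℝ) * q ^ j ≤ (∑ t ∈ range (k + 1), q ^ t) ^ N := by
  rw [← eval_geomPoly, ← Polynomial.eval_pow,
    Polynomial.eval_eq_sum_range' (natDegree_geomPoly_pow_lt ℝ k N)]
  simp only [coeff_geomPoly_pow_real]
  exact single_le_sum (f := fun j => (knomial k N j : ℝ) * q ^ j)
    (fun _ _ => mul_nonneg (Nat.cast_nonneg _) (pow_nonneg hq _))
    (mem_range.2 (Nat.lt_succ_iff.2 hj))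

/-- Some coefficient near the mean is of the order of the exponential upper bound, up to a
polynomial factor; the window has width `O(√N)`. -/
lemma exists_knomial_large (k : ℕ) {q x : ℝ} (hq : 0 < q)
    (hmean : ∑ t ∈ range (k + 1), (t : ℝ) * q ^ t = x * ∑ t ∈ range (k + 1), q ^ t) :
    ∃ v : ℝ, ∀ (N : ℕ) (c : ℝ), 0 < c → 2 * (N * v) ≤ c ^ 2 → ∃ j ≤ N * k,
      |(j : ℝ) - N * x| ≤ c ∧
      (∑ t ∈ range (k + 1), q ^ t) ^ N ≤ 2 * (N * k + 1) * (knomial k N j * q ^ j) := by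
  have hE : 0 < (geomPoly ℝ k).eval q := by rw [eval_geomPoly]; exact sum_pow_pos k hq.le
  refine ⟨(Polynomial.eulerDeriv (Polynomial.eulerDeriv (geomPoly ℝ k))).eval q /
    (geomPoly ℝ k).eval q - x ^ 2, fun N c hc hN => ?_⟩
  obtain ⟨j, hj, h1, h2⟩ := Polynomial.exists_coeff_pow_large (p := geomPoly ℝ k) hq hE
    (fun N j => by rw [coeff_geomPoly_pow_real]; positivity)
    (by rw [eval_eulerDeriv_geomPoly, eval_geomPoly, hmean])
    (by rw [add_sub_cancel, div_mul_cancel₀ _ hE.ne']) (natDegree_geomPoly_pow_lt ℝ k N) hc hN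
  refine ⟨j, Nat.lt_succ_iff.1 hj, h1, ?_⟩
  rw [eval_geomPoly, coeff_geomPoly_pow_real] at h2
  exact_mod_cast h2

/-- The lower bound on the exponential growth rate `L` of the cloned coefficients. -/
lemma entropy_le_of_log_knomial_le {k n r : ℕ} (hr0 : 0 < r) (hrk : r < n * k) {q L : ℝ}
    (hq : 0 < q)
    (hmean : (n : ℝ) * ∑ t ∈ range (k + 1), (t : ℝ) * q ^ t
      = r * ∑ t ∈ range (k + 1), q ^ t)
    (hL : ∀ s : ℕ, 0 < s → Real.log (knomial k (s * n) (s * r)) ≤ s * L) :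
    n * Real.log (∑ t ∈ range (k + 1), q ^ t) - r * Real.log q ≤ L := by
  have hn : (0 : ℝ) < n := by
    rcases Nat.eq_zero_or_pos n with rfl | h
    · simp at hrk
    · exact_mod_cast h
  set S := ∑ t ∈ range (k + 1), q ^ t with hS
  have hSpos : 0 < S := sum_pow_pos k hq.le
  obtain ⟨v, hv⟩ := exists_knomial_large k (x := r / n) hq (by
    rw [← hS]; field_simp; linarith)
  obtain ⟨c, hc⟩ := exists_nat_ge (1 + 2 * (n * |v|))
  have hc1 : (1 : ℝ) ≤ c := le_trans (by nlinarith [abs_nonneg v]) hc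
  have hD : 0 ≤ Real.log (2 * (n * k + 1)) :=
    Real.log_nonneg (by nlinarith [Nat.cast_nonneg (α := ℝ) (n * k)])
  set D := Real.log (2 * (n * k + 1) : ℝ) with hDdef
  by_contra! hlt
  set A := n * Real.log S - r * Real.log q with hA
  obtain ⟨u, hu⟩ := exists_nat_gt (max 1 ((c * L + c * |Real.log q| + 2 + D) / (A - L)))
  have hu1 : (1 : ℝ) < u := (le_max_left _ _).trans_lt hu
  have hu2 := (le_max_right _ _).trans_lt hu
  rw [div_lt_iff₀ (by linarith)] at hu2
  have hu0 : 0 < u := by exact_mod_cast (zero_lt_one.trans hu1)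
  have hc0 : 0 < c := by exact_mod_cast (zero_lt_one.trans_le hc1)
  obtain ⟨j, hjk, hj, hle⟩ := hv (u ^ 2 * n) (c * u) (by positivity) (by
    push_cast
    have h1 : n * v ≤ n * |v| := mul_le_mul_of_nonneg_left (le_abs_self v) hn.le
    have h2 : 2 * (n * v) ≤ (c : ℝ) ^ 2 := by nlinarith
    nlinarith [mul_le_mul_of_nonneg_left h2 (sq_nonneg (u : ℝ))])
  have hx : ((u ^ 2 * n : ℕ) : ℝ) * (r / n) = u ^ 2 * r := by push_cast; field_simp
  rw [hx, abs_le] at hj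
  have hj1 : j ≤ u ^ 2 * r + c * u := by
    have : (j : ℝ) ≤ ((u ^ 2 * r + c * u : ℕ) : ℝ) := by push_cast; linarith
    exact_mod_cast this
  have hj2 : u ^ 2 * r ≤ j + c * u := by
    have : ((u ^ 2 * r : ℕ) : ℝ) ≤ ((j + c * u : ℕ) : ℝ) := by push_cast; linarith
    exact_mod_cast this
  have hcur : c * u ≤ c * u * r := Nat.le_mul_of_pos_right _ hr0
  have hcur2 : c * u * r + c * u ≤ c * u * n * k := by
    have := Nat.mul_le_mul_left (c * u) hrk
    rw [Nat.succ_eq_add_one, mul_add, mul_one, ← mul_assoc] at this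
    exact this
  have hJ : 0 < knomial k (c * u * n) ((u ^ 2 + c * u) * r - j) :=
    knomial_pos k _ _ (by rw [add_mul]; omega)
  have hmul := knomial_mul_le k (u ^ 2 * n) (c * u * n) j ((u ^ 2 + c * u) * r - j)
  rw [← add_mul, Nat.add_sub_cancel' (by rw [add_mul]; omega)] at hmul
  have hle2 := (Nat.le_mul_of_pos_right _ hJ).trans hmul
  have hjpos := knomial_pos k _ _ hjk
  have hlog1 : Real.log (knomial k (u ^ 2 * n) j) ≤ ((u ^ 2 + c * u : ℕ) : ℝ) * L :=
    (Real.log_le_log (by exact_mod_cast hjpos) (by exact_mod_cast hle2)).trans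
      (hL _ (by positivity))
  have hlog2 := Real.log_le_log (pow_pos hSpos _) hle
  have hkn : (0 : ℝ) < knomial k (u ^ 2 * n) j := by exact_mod_cast hjpos
  rw [Real.log_pow, Real.log_mul (by positivity) (mul_pos hkn (pow_pos hq j)).ne',
    Real.log_mul hkn.ne' (pow_pos hq j).ne', Real.log_pow] at hlog2
  have hlog3 : Real.log (2 * (((u ^ 2 * n : ℕ) : ℝ) * k + 1)) ≤ D + 2 * u := by
    have h1 : 2 * (((u ^ 2 * n : ℕ) : ℝ) * k + 1) ≤ 2 * (n * k + 1) * u ^ 2 := by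
      push_cast
      nlinarith [hu1]
    refine (Real.log_le_log (by positivity) h1).trans ?_
    rw [Real.log_mul (by positivity) (by positivity), Real.log_pow]
    have := Real.log_le_self (Nat.cast_nonneg (α := ℝ) u)
    push_cast
    linarith
  have hlog4 : (j - u ^ 2 * r : ℝ) * Real.log q ≤ c * u * |Real.log q| := by
    refine (le_abs_self _).trans ?_
    rw [abs_mul]
    exact mul_le_mul_of_nonneg_right (abs_le.2 hj) (abs_nonneg _)
  push_cast at hlog1 hlog2
  push_cast at hlog3
  have hfin : (u : ℝ) ^ 2 * (A - L) ≤ u * (c * L + c * |Real.log q| + 2) + D := by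
    rw [hA]; linarith
  nlinarith

theorem tendsto_log_knomial {k n r : ℕ} (hr0 : 0 < r) (hrk : r < n * k) {q : ℝ} (hq : 0 < q)
    (hmean : (n : ℝ) * ∑ t ∈ range (k + 1), (t : ℝ) * q ^ t
      = r * ∑ t ∈ range (k + 1), q ^ t) :
    Tendsto (fun s : ℕ => 1 / (s : ℝ) * Real.log (knomial k (s * n) (s * r))) atTop
      (nhds (n * Real.log (∑ t ∈ range (k + 1), q ^ t) - r * Real.log q)) := by
  have hSpos : 0 < ∑ t ∈ range (k + 1), q ^ t := sum_pow_pos k hq.le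
  have hsr (s : ℕ) : s * r ≤ s * n * k := by
    rw [mul_assoc]; exact Nat.mul_le_mul_left _ hrk.le
  have hpos (s : ℕ) : (0 : ℝ) < knomial k (s * n) (s * r) := by
    exact_mod_cast knomial_pos k _ _ (hsr s)
  set u : ℕ → ℝ := fun s => -Real.log (knomial k (s * n) (s * r)) with hu
  have hsub : Subadditive u := fun a b => by
    simp only [hu]
    rw [← neg_add, neg_le_neg_iff, ← Real.log_mul (hpos a).ne' (hpos b).ne']
    refine Real.log_le_log (mul_pos (hpos a) (hpos b)) ?_
    rw [add_mul, add_mul]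
    exact_mod_cast knomial_mul_le k _ _ _ _
  have hupper (s : ℕ) : Real.log (knomial k (s * n) (s * r)) ≤
      s * (n * Real.log (∑ t ∈ range (k + 1), q ^ t) - r * Real.log q) := by
    have := Real.log_le_log (mul_pos (hpos s) (pow_pos hq _)) (knomial_mul_pow_le (hsr s) hq.le)
    rw [Real.log_mul (hpos s).ne' (pow_pos hq _).ne', Real.log_pow, Real.log_pow] at this
    push_cast at this
    linarith
  have hge (s : ℕ) (hs : 0 < s) :
      -(n * Real.log (∑ t ∈ range (k + 1), q ^ t) - r * Real.log q) ≤ u s / s := by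
    rw [le_div_iff₀ (by exact_mod_cast hs)]
    have := hupper s
    simp only [hu]
    linarith
  have hbdd : BddBelow (Set.range fun s => u s / s) := by
    refine ⟨min 0 (-(n * Real.log (∑ t ∈ range (k + 1), q ^ t) - r * Real.log q)), ?_⟩
    rintro _ ⟨s, rfl⟩
    rcases Nat.eq_zero_or_pos s with rfl | hs
    · simp
    · exact (min_le_right _ _).trans (hge s hs)
  have hlim := hsub.tendsto_lim hbdd
  have hle := entropy_le_of_log_knomial_le hr0 hrk hq hmean (L := -hsub.lim) fun s hs => by
    have := hsub.lim_le_div hbdd hs.ne'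
    rw [le_div_iff₀ (by exact_mod_cast hs)] at this
    simp only [hu] at this
    linarith
  have hge' := ge_of_tendsto hlim ((eventually_gt_atTop 0).mono hge)
  have heq : -hsub.lim = n * Real.log (∑ t ∈ range (k + 1), q ^ t) - r * Real.log q := by
    linarith
  rw [← heq]
  refine hlim.neg.congr fun s => ?_
  simp only [hu]
  ring

lemma tgMean_coe (k : ℕ) (q : ℝ) : tgMean k q =
    (∑ t ∈ range (k + 1), (t : ℝ) * q ^ t) / ∑ t ∈ range (k + 1), q ^ t := by
  simp [tgMean]

lemma tgMean_coe_lt {k : ℕ} (hk : 0 < k) {q : ℝ} (hq : 0 ≤ q) : tgMean k q < k := by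
  rw [tgMean_coe, div_lt_iff₀ (sum_pow_pos k hq), mul_sum]
  refine sum_lt_sum (fun t ht => ?_) ⟨0, by simp, by simpa using hk⟩
  have : (t : ℝ) ≤ k := by exact_mod_cast Nat.lt_succ_iff.1 (mem_range.1 ht)
  exact mul_le_mul_of_nonneg_right this (pow_nonneg hq t)

lemma exists_le_tgMean {k : ℕ} {x : ℝ} (hx : 0 ≤ x) (hxk : x < k) :
    ∃ q : ℝ, 0 ≤ q ∧ x ≤ tgMean k q := by
  have hkx : 0 < k - x := sub_pos.2 hxk
  have hb : 0 ≤ x * k / (k - x) := by positivity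
  refine ⟨1 + x * k / (k - x), by positivity, ?_⟩
  set q := 1 + x * k / (k - x) with hq
  have hq1 : 1 ≤ q := by linarith
  have hq2 : x * k ≤ q * (k - x) := by
    rw [hq, add_mul, div_mul_cancel₀ _ hkx.ne']; linarith
  rw [tgMean_coe, le_div_iff₀ (sum_pow_pos k (by linarith)), sum_range_succ, sum_range_succ]
  have hk0 : (0 : ℝ) < k := by linarith
  obtain ⟨m, rfl⟩ : ∃ m, k = m + 1 :=
    Nat.exists_eq_succ_of_ne_zero (by rintro rfl; simp at hk0)
  have h1 : 0 ≤ ∑ t ∈ range (m + 1), (t : ℝ) * q ^ t :=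
    sum_nonneg fun t _ => by positivity
  have h2 : ∑ t ∈ range (m + 1), q ^ t ≤ ((m + 1 : ℕ) : ℝ) * q ^ m := by
    have := sum_le_card_nsmul (range (m + 1)) (fun t => q ^ t) (q ^ m) fun t ht =>
      pow_le_pow_right₀ hq1 (Nat.lt_succ_iff.1 (mem_range.1 ht))
    simpa using this
  have h3 := mul_le_mul_of_nonneg_left h2 hx
  have h4 := mul_le_mul_of_nonneg_right hq2 (pow_nonneg (zero_le_one.trans hq1) m)
  rw [pow_succ]
  nlinarith

lemma continuousOn_tgMean (k : ℕ) : ContinuousOn (tgMean k) (Set.Ici 0) := by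
  rw [funext (tgMean_coe k)]
  refine ContinuousOn.div (by fun_prop) (by fun_prop) fun q hq => (sum_pow_pos k hq).ne'

lemma tgMean_tgQ {k : ℕ} {x : ℝ} (hx : 0 < x) (hxk : x < k) :
    0 < tgQ k x ∧ tgMean k (tgQ k x) = x := by
  have hbdd : BddBelow {q : ℝ | 0 ≤ q ∧ x ≤ tgMean k q} := ⟨0, fun q hq => hq.1⟩
  have hclosed : IsClosed {q : ℝ | 0 ≤ q ∧ x ≤ tgMean k q} :=
    (continuousOn_tgMean k).preimage_isClosed_of_isClosed isClosed_Ici isClosed_Ici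
  obtain ⟨h0, h1⟩ := hclosed.csInf_mem (exists_le_tgMean hx.le hxk) hbdd
  change 0 ≤ tgQ k x at h0
  change x ≤ tgMean k (tgQ k x) at h1
  have hz : tgMean k 0 = 0 := by
    rw [tgMean_coe, sum_eq_zero, zero_div]
    intro t _
    rcases t with _ | t <;> simp
  obtain ⟨q, hq, hqx⟩ := intermediate_value_Icc h0
    ((continuousOn_tgMean k).mono Set.Icc_subset_Ici_self) ⟨hz.trans_le hx.le, h1⟩
  have : q = tgQ k x := le_antisymm hq.2 (csInf_le hbdd ⟨hq.1, hqx.ge⟩)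
  rw [← this]
  refine ⟨lt_of_le_of_ne hq.1 ?_, hqx⟩
  rintro rfl
  linarith

/-- The degenerate case: when the ratio is `0`, the distribution is a point mass. -/
lemma Hmax_eq_zero {κ : ℕ∞} {x : ℝ} (h : tgQ κ x = 0) : Hmax κ x = 0 := by
  have hp : tgP κ x = 1 := by
    unfold tgP
    split_ifs
    · simp [h]
    · simp [h, sum_range_succ']
  have : ∀ t : ℕ, tgPMF κ x t * Real.log (tgPMF κ x t) = 0 := fun t => by
    unfold tgPMF
    split_ifs
    · rcases t with _ | t <;> simp [h, hp]
    · simp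
  simp [Hmax, this]

lemma tgQ_zero (κ : ℕ∞) : tgQ κ 0 = 0 := by
  refine (IsLeast.csInf_eq ⟨⟨le_rfl, ?_⟩, fun q hq => hq.1⟩)
  unfold tgMean
  split_ifs
  · simp
  · exact div_nonneg (sum_nonneg fun t _ => by positivity) (sum_pow_pos _ le_rfl).le

lemma tgQ_self {k : ℕ} (hk : 0 < k) : tgQ k k = 0 := by
  have : {q : ℝ | 0 ≤ q ∧ (k : ℝ) ≤ tgMean k q} = ∅ :=
    Set.eq_empty_of_forall_notMem fun q hq => (tgMean_coe_lt hk hq.1).not_ge hq.2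
  rw [tgQ, this, Real.sInf_empty]

lemma Hmax_coe {k : ℕ} {x : ℝ} (hx : 0 < x) (hxk : x < k) :
    Hmax k x = Real.log (∑ t ∈ range (k + 1), tgQ k x ^ t) - x * Real.log (tgQ k x) := by
  obtain ⟨hq, hm⟩ := tgMean_tgQ hx hxk
  have hS := sum_pow_pos k hq.le
  have hP : tgP k x = (∑ t ∈ range (k + 1), tgQ k x ^ t)⁻¹ := by simp [tgP]
  rw [tgMean_coe, div_eq_iff hS.ne'] at hm
  rw [Hmax, tsum_eq_sum (s := range (k + 1))]
  · have : ∀ t ∈ range (k + 1), tgPMF k x t * Real.log (tgPMF k x t) =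
        (∑ t ∈ range (k + 1), tgQ k x ^ t)⁻¹ *
        (Real.log (tgQ k x) * (t * tgQ k x ^ t)
          - Real.log (∑ t ∈ range (k + 1), tgQ k x ^ t) * tgQ k x ^ t) := fun t ht => by
      have htk : (t : ℕ∞) ≤ (k : ℕ∞) := by
        exact_mod_cast Nat.lt_succ_iff.1 (mem_range.1 ht)
      rw [tgPMF, if_pos htk, hP, Real.log_mul (inv_ne_zero hS.ne') (pow_pos hq t).ne',
        Real.log_inv, Real.log_pow]
      ring
    rw [sum_congr rfl this, ← mul_sum, sum_sub_distrib, ← mul_sum, ← mul_sum, hm]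
    field_simp
    ring
  · intro t ht
    have htk : ¬ (t : ℕ∞) ≤ (k : ℕ∞) := by
      rw [Nat.cast_le]
      simpa [Nat.lt_succ_iff] using ht
    simp [tgPMF, htk]

lemma tgQ_top {x : ℝ} (hx : 0 < x) : tgQ ⊤ x = x / (1 + x) := by
  have h1 : 1 - x / (1 + x) = 1 / (1 + x) := by field_simp; ring
  refine IsLeast.csInf_eq ⟨⟨by positivity, ?_⟩, ?_⟩
  · rw [tgMean, if_pos rfl, h1]
    field_simp
    exact le_rfl
  · rintro q ⟨hq, hle⟩
    rw [tgMean, if_pos rfl] at hle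
    have hq1 : 0 < 1 - q := by
      by_contra! h
      exact absurd (hle.trans (div_nonpos_of_nonneg_of_nonpos hq h)) hx.not_ge
    rw [le_div_iff₀ hq1] at hle
    rw [div_le_iff₀ (by positivity)]
    linarith

lemma Hmax_top {x : ℝ} (hx : 0 < x) :
    Hmax ⊤ x = (1 + x) * Real.log (1 + x) - x * Real.log x := by
  have hq := tgQ_top hx
  have hP : tgP ⊤ x = 1 / (1 + x) := by
    rw [tgP, if_pos rfl, hq]; field_simp; ring
  have hx1 : 0 < 1 + x := by positivity
  have hn : ‖x / (1 + x)‖ < 1 := by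
    rw [Real.norm_of_nonneg (by positivity), div_lt_one hx1]; linarith
  have hterm : ∀ t : ℕ, tgPMF ⊤ x t * Real.log (tgPMF ⊤ x t) =
      1 / (1 + x) * (Real.log x - Real.log (1 + x)) * (t * (x / (1 + x)) ^ t)
        - 1 / (1 + x) * Real.log (1 + x) * (x / (1 + x)) ^ t := fun t => by
    rw [tgPMF, if_pos le_top, hP, hq, Real.log_mul (by positivity) (by positivity), Real.log_pow,
      Real.log_div hx.ne' hx1.ne', one_div, Real.log_inv]
    ring
  have hsum := ((hasSum_coe_mul_geometric_of_norm_lt_one hn).mul_left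
    (1 / (1 + x) * (Real.log x - Real.log (1 + x)))).sub
    ((hasSum_geometric_of_norm_lt_one hn).mul_left (1 / (1 + x) * Real.log (1 + x)))
  have h1 : 1 - x / (1 + x) = 1 / (1 + x) := by field_simp; ring
  rw [Hmax, tsum_congr hterm, hsum.tsum_eq, h1]
  field_simp
  ring

lemma tendsto_log_knomial_top {n r : ℕ} (hn : 0 < n) (hr : 0 < r) :
    Tendsto (fun s : ℕ => 1 / (s : ℝ) * Real.log (knomial ⊤ (s * n) (s * r))) atTop
      (nhds (n * Hmax ⊤ (r / n))) := by
  have hn' : (0 : ℝ) < n := by exact_mod_cast hn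
  have hr' : (0 : ℝ) < r := by exact_mod_cast hr
  have hbin := tendsto_log_knomial (k := 1) (n := r + n) (r := r) hr (by omega) (q := r / n)
    (by positivity) (by simp [sum_range_succ]; field_simp; ring)
  have hconst : Tendsto (fun s : ℕ => 1 / (s : ℝ) * Real.log (n / (r + n : ℕ))) atTop
      (nhds (0 * Real.log (n / (r + n : ℕ)))) :=
    tendsto_one_div_atTop_nhds_zero_nat.mul_const _
  have hlim := hbin.add hconst
  have hval : (n : ℝ) * Hmax ⊤ (r / n) = ((r + n : ℕ) : ℝ) *
      Real.log (∑ t ∈ range (1 + 1), (r / n : ℝ) ^ t) - r * Real.log (r / n)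
        + 0 * Real.log (n / (r + n : ℕ)) := by
    rw [Hmax_top (by positivity)]
    simp only [sum_range_succ, range_zero, sum_empty, pow_zero, pow_one, zero_add]
    push_cast
    field_simp
    ring
  rw [hval]
  refine hlim.congr' ((eventually_gt_atTop 0).mono fun s hs => ?_)
  have hs' : (0 : ℝ) < s := by exact_mod_cast hs
  rw [← mul_add]
  congr 1
  rw [Nat.cast_one, knomial_one, knomial, if_pos rfl]
  have hc : 0 < (s * (r + n)).choose (s * r) :=
    Nat.choose_pos (Nat.mul_le_mul_left _ (by omega))
  have hc' : (0 : ℝ) < (s * (r + n)).choose (s * r) := by exact_mod_cast hc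
  rw [← Real.log_mul hc'.ne' (by positivity)]
  congr 1
  have hsn : 0 < s * n := Nat.mul_pos hs hn
  have key := Nat.choose_mul_succ_eq (s * r + s * n - 1) (s * r)
  rw [Nat.sub_add_cancel (by omega), Nat.add_sub_cancel_left, ← mul_add] at key
  have key' : (((s * (r + n) - 1).choose (s * r) : ℕ) : ℝ) * (s * (r + n))
      = ((s * (r + n)).choose (s * r) : ℕ) * (s * n) := by exact_mod_cast key
  rw [← mul_add]
  push_cast
  rw [mul_div_assoc', div_eq_iff (by positivity)]
  have := mul_left_cancel₀ hs'.ne' (a := (s : ℝ))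
    (b := ((s * (r + n) - 1).choose (s * r) : ℝ) * (r + n))
    (c := ((s * (r + n)).choose (s * r) : ℝ) * n) (by linarith)
  exact this.symm

/-- **Lemma.** `lim_{s→∞} (1/s) ln (sn choose sr)_κ = n H^max_κ(r/n)`. -/
theorem knomial_cloning_entropy_limit (κ : ℕ∞) (hκ : 1 ≤ κ) (n r : ℕ) (hn : 0 < n)
    (hr : (r : ℕ∞) ≤ (n : ℕ∞) * κ) :
    Filter.Tendsto (fun s : ℕ => (1 / (s : ℝ)) * Real.log (knomial κ (s * n) (s * r)))
      Filter.atTop (nhds ((n : ℝ) * Hmax κ ((r : ℝ) / n))) := by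
  have hn' : (0 : ℝ) < n := by exact_mod_cast hn
  rcases Nat.eq_zero_or_pos r with rfl | hr0
  · have h0 : Hmax κ ((0 : ℕ) / n) = 0 := Hmax_eq_zero (by simp [tgQ_zero])
    have h1 (s : ℕ) : knomial κ (s * n) 0 = 1 := by
      induction κ using ENat.recTopCoe with
      | top => simp [knomial]
      | coe k => exact knomial_zero_right k _
    rw [h0, mul_zero]
    simp [h1]
  have hr0' : (0 : ℝ) < r := by exact_mod_cast hr0
  induction κ using ENat.recTopCoe with
  | top => exact tendsto_log_knomial_top hn hr0
  | coe k =>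
    have hk : 0 < k := by exact_mod_cast hκ
    rcases (show r ≤ n * k by exact_mod_cast hr).eq_or_lt with rfl | hlt
    · have h0 : Hmax k ((n * k : ℕ) / n) = 0 := Hmax_eq_zero (by
        rw [Nat.cast_mul, mul_div_cancel_left₀ _ hn'.ne', tgQ_self hk])
      rw [h0, mul_zero]
      simp [← mul_assoc, knomial_mul_self]
    · have hlt' : (r : ℝ) < n * k := by exact_mod_cast hlt
      have hx : (0 : ℝ) < r / n := by positivity
      have hxk : (r : ℝ) / n < k := by rw [div_lt_iff₀ hn']; linarith
      obtain ⟨hq, hm⟩ := tgMean_tgQ hx hxk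
      rw [tgMean_coe, div_eq_iff (sum_pow_pos k hq.le).ne'] at hm
      have := tendsto_log_knomial hr0 hlt hq (by rw [hm]; field_simp)
      rwa [Hmax_coe hx hxk, mul_sub, ← mul_assoc, mul_div_cancel₀ _ hn'.ne']
end

section
/- For every integer κ ≥ 2 there exists δ = δ(κ) ∈ (0,1) with the following property: for every n ≥ 1 and every choice of nonnegative reals α_1,…,α_n with α_1+⋯+α_n = 1, the function J(r) := n·H^max_κ(r/n) − Σ_{j=1}^n H^max_κ(r·α_j) is concave on the interval (0, δκ / max{α_1,…,α_n}], and strictly concave there if the α_j are not all equal. -/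
open Real Filter Finset

theorem exists_strictAntiOn_ratio {m : ℝ → ℝ} (hm : AnalyticAt ℝ m 0) (h0 : m 0 = 1)
    (h1 : deriv m 0 = 1) :
    ∃ (a : ℝ) (D P R : ℝ → ℝ), 0 < a ∧ P 0 = 0 ∧
      (∀ q ∈ Set.Icc 0 a, HasDerivAt (fun q => q * m q) (D q) q ∧ 0 < D q ∧
        P q * D q = q * m q ^ 2 ∧ HasDerivAt P (R q * D q) q) ∧
      StrictAntiOn R (Set.Icc 0 a) := by
  set D : ℝ → ℝ := fun q => m q + q * deriv m q with hD
  set w : ℝ → ℝ := fun q => m q ^ 2 / D q with hw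
  set R : ℝ → ℝ := fun q => (w q + q * deriv w q) / D q with hR
  have hD0 : D 0 = 1 := by simp [hD, h0]
  have hw0 : w 0 = 1 := by simp [hw, hD0, h0]
  have hDa : AnalyticAt ℝ D 0 := hm.add (analyticAt_id.mul hm.deriv)
  have hwa : AnalyticAt ℝ w 0 := (hm.pow 2).div hDa (by simp [hD0])
  have hRa : AnalyticAt ℝ R 0 :=
    (hwa.add (analyticAt_id.mul hwa.deriv)).div hDa (by simp [hD0])
  have hmd : HasDerivAt m 1 0 := h1 ▸ hm.differentiableAt.hasDerivAt
  have hDd : HasDerivAt D 2 0 := by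
    have := hmd.add ((hasDerivAt_id (0 : ℝ)).mul hm.deriv.differentiableAt.hasDerivAt)
    refine this.congr_deriv ?_
    simp [h1]; norm_num
  have hwd : HasDerivAt w 0 0 := by
    have := (hmd.pow 2).div hDd (by simp [hD0])
    refine this.congr_deriv ?_
    simp [hD0, h0]
  have hRd : HasDerivAt R (-2) 0 := by
    have := (hwd.add ((hasDerivAt_id (0 : ℝ)).mul hwa.deriv.differentiableAt.hasDerivAt)).div
      hDd (by simp [hD0])
    refine this.congr_deriv ?_
    simp [hD0, hw0, hwd.deriv]
  have hev : ∀ᶠ q in nhds (0 : ℝ), AnalyticAt ℝ m q ∧ AnalyticAt ℝ w q ∧ AnalyticAt ℝ R q ∧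
      0 < D q ∧ deriv R q < 0 :=
    hm.eventually_analyticAt.and <| hwa.eventually_analyticAt.and <|
      hRa.eventually_analyticAt.and <|
      (hDa.continuousAt.eventually_const_lt (by simp [hD0])).and
      (hRa.deriv.continuousAt.eventually_lt_const (by simp [hRd.deriv]))
  obtain ⟨ε, hε, hball⟩ := Metric.eventually_nhds_iff.1 hev
  have hall : ∀ q ∈ Set.Icc 0 (ε / 2), AnalyticAt ℝ m q ∧ AnalyticAt ℝ w q ∧ AnalyticAt ℝ R q ∧
      0 < D q ∧ deriv R q < 0 := fun q hq => hball (by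
    rw [Real.dist_eq, sub_zero, abs_of_nonneg hq.1]; linarith [hq.2])
  refine ⟨ε / 2, D, fun q => q * w q, R, by positivity, by simp, fun q hq => ?_, ?_⟩
  · obtain ⟨hmq, hwq, -, hDq, -⟩ := hall q hq
    refine ⟨?_, hDq, ?_, ?_⟩
    · have := (hasDerivAt_id q).mul hmq.differentiableAt.hasDerivAt
      refine this.congr_deriv ?_
      simp [hD]
    · simp only [hw]; field_simp
    · have := (hasDerivAt_id q).mul hwq.differentiableAt.hasDerivAt
      refine this.congr_deriv ?_
      simp only [hR, id]; field_simp
  · refine strictAntiOn_of_deriv_neg (convex_Icc _ _)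
      (fun q hq => (hall q hq).2.2.1.continuousAt.continuousWithinAt) fun q hq => ?_
    exact (hall q (interior_subset hq)).2.2.2.2

theorem sInf_le_eq_of_strictMonoOn {M : ℝ → ℝ} {a q : ℝ} (hM : StrictMonoOn M (Set.Icc 0 a))
    (hq : q ∈ Set.Icc 0 a) : sInf {y : ℝ | 0 ≤ y ∧ M q ≤ M y} = q := by
  refine IsLeast.csInf_eq ⟨⟨hq.1, le_rfl⟩, fun y hy => ?_⟩
  by_contra! h
  exact absurd hy.2 (not_le.2 (hM ⟨hy.1, h.le.trans hq.2⟩ hq h))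

theorem continuousAt_of_leftInverse_strictMonoOn {M Q : ℝ → ℝ} {a : ℝ} (ha : 0 < a) (hM0 : M 0 = 0)
    (hM : StrictMonoOn M (Set.Icc 0 a)) (hMc : ContinuousOn M (Set.Icc 0 a))
    (hQ : ∀ q ∈ Set.Icc 0 a, Q (M q) = q) :
    (∀ x ∈ Set.Icc 0 (M a), Q x ∈ Set.Icc 0 a ∧ M (Q x) = x) ∧
      StrictMonoOn Q (Set.Icc 0 (M a)) ∧ ContinuousWithinAt Q (Set.Ici 0) 0 ∧
      ∀ x ∈ Set.Ioo 0 (M a), ContinuousAt Q x := by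
  have hsurj : ∀ x ∈ Set.Icc 0 (M a), Q x ∈ Set.Icc 0 a ∧ M (Q x) = x := by
    intro x hx
    obtain ⟨q, hq, rfl⟩ := intermediate_value_Icc ha.le hMc (by rwa [hM0])
    rw [hQ q hq]
    exact ⟨hq, rfl⟩
  have hmono : StrictMonoOn Q (Set.Icc 0 (M a)) := by
    intro x hx y hy hxy
    rwa [← hM.lt_iff_lt (hsurj x hx).1 (hsurj y hy).1, (hsurj x hx).2, (hsurj y hy).2]
  have h0 : (0 : ℝ) ∈ Set.Icc 0 a := ⟨le_rfl, ha.le⟩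
  have haa : a ∈ Set.Icc 0 a := ⟨ha.le, le_rfl⟩
  have hMa : 0 < M a := hM0 ▸ hM h0 haa ha
  have hQ0 : Q 0 = 0 := by simpa [hM0] using hQ 0 h0
  have himg : Set.Icc 0 a ⊆ Q '' Set.Icc 0 (M a) := fun q hq =>
    ⟨M q, ⟨hM0 ▸ hM.monotoneOn h0 hq hq.1, hM.monotoneOn hq haa hq.2⟩, hQ q hq⟩
  refine ⟨hsurj, hmono, ?_, fun x hx => ?_⟩
  · refine hmono.continuousWithinAt_right_of_image_mem_nhdsWithin (Icc_mem_nhdsGE hMa) ?_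
    rw [hQ0]
    exact mem_of_superset (Icc_mem_nhdsGE ha) himg
  · have hxm := Set.Ioo_subset_Icc_self hx
    refine hmono.continuousAt_of_image_mem_nhds (Icc_mem_nhds hx.1 hx.2) ?_
    refine mem_of_superset (Icc_mem_nhds ?_ ?_) himg
    · rw [← hQ0]; exact hmono ⟨le_rfl, hMa.le⟩ hxm hx.1
    · rw [← hQ a haa]; exact hmono hxm ⟨hMa.le, le_rfl⟩ hx.2

theorem tgMean_natCast (κ : ℕ) (q : ℝ) :
    tgMean κ q = (∑ t ∈ Finset.range (κ + 1), (t : ℝ) * q ^ t) /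
      ∑ t ∈ Finset.range (κ + 1), q ^ t := by
  simp [tgMean]

theorem sum_range_pow_pos (κ : ℕ) {q : ℝ} (hq : 0 ≤ q) :
    0 < ∑ t ∈ Finset.range (κ + 1), q ^ t := by
  rw [Finset.sum_range_succ']
  positivity

theorem Hmax_natCast (κ : ℕ) {x : ℝ} (hq : 0 ≤ tgQ κ x) :
    Hmax κ x = Real.log (∑ t ∈ Finset.range (κ + 1), tgQ κ x ^ t) -
      tgMean κ (tgQ κ x) * Real.log (tgQ κ x) := by
  set q := tgQ κ x with hqd
  have hB := sum_range_pow_pos κ hq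
  set B := ∑ t ∈ Finset.range (κ + 1), q ^ t with hBd
  have hp : ∀ t ∈ Finset.range (κ + 1), tgPMF κ x t = B⁻¹ * q ^ t := by
    intro t ht
    have : t ≤ κ := Nat.lt_succ_iff.1 (Finset.mem_range.1 ht)
    simp [tgPMF, tgP, this, ← hqd, ← hBd]
  have hz : ∀ t ∉ Finset.range (κ + 1), tgPMF κ x t * Real.log (tgPMF κ x t) = 0 := by
    intro t ht
    have : ¬ t ≤ κ := fun h => ht (Finset.mem_range.2 (Nat.lt_succ_of_le h))
    simp [tgPMF, this]
  have hterm : ∀ t ∈ Finset.range (κ + 1), tgPMF κ x t * Real.log (tgPMF κ x t) =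
      B⁻¹ * (t * q ^ t) * Real.log q - B⁻¹ * Real.log B * q ^ t := by
    intro t ht
    rw [hp t ht]
    rcases hq.eq_or_lt with h | h
    · rcases Nat.eq_zero_or_pos t with rfl | ht0
      · simp
      · simp [← h, ht0.ne']
    · rw [Real.log_mul (by positivity) (by positivity), Real.log_inv, Real.log_pow]
      ring
  rw [Hmax, tsum_eq_sum hz, Finset.sum_congr rfl hterm, Finset.sum_sub_distrib,
    ← Finset.sum_mul, ← Finset.mul_sum, ← Finset.mul_sum, tgMean_natCast, ← hBd]
  field_simp
  ring

theorem sum_range_natCast_mul_pow (κ : ℕ) (q : ℝ) :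
    ∑ t ∈ Finset.range (κ + 1), (t : ℝ) * q ^ t =
      q * ∑ t ∈ Finset.range (κ + 1), (t : ℝ) * q ^ (t - 1) := by
  rw [Finset.mul_sum]
  refine Finset.sum_congr rfl fun t _ => ?_
  cases t with
  | zero => simp
  | succ t => simp [pow_succ]; ring

theorem hasDerivAt_sum_range_pow (κ : ℕ) (q : ℝ) :
    HasDerivAt (fun q : ℝ => ∑ t ∈ Finset.range (κ + 1), q ^ t)
      (∑ t ∈ Finset.range (κ + 1), (t : ℝ) * q ^ (t - 1)) q :=
  HasDerivAt.fun_sum fun t _ => hasDerivAt_pow t q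

/-- Mean of the truncated geometric distribution divided by its ratio. -/
noncomputable def tgMeanDiv (κ : ℕ) (q : ℝ) : ℝ :=
  (∑ t ∈ Finset.range (κ + 1), (t : ℝ) * q ^ (t - 1)) / ∑ t ∈ Finset.range (κ + 1), q ^ t

theorem tgMean_eq_mul_tgMeanDiv (κ : ℕ) (q : ℝ) : tgMean κ q = q * tgMeanDiv κ q := by
  rw [tgMean_natCast, sum_range_natCast_mul_pow, tgMeanDiv, mul_div_assoc]

theorem tgMeanDiv_zero {κ : ℕ} (hκ : 2 ≤ κ) : tgMeanDiv κ 0 = 1 := by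
  obtain ⟨k, rfl⟩ := Nat.exists_eq_add_of_le' hκ
  simp [tgMeanDiv, Finset.sum_range_succ']

theorem analyticAt_tgMeanDiv (κ : ℕ) : AnalyticAt ℝ (tgMeanDiv κ) 0 := by
  refine AnalyticAt.div ?_ ?_ (sum_range_pow_pos κ le_rfl).ne'
  · exact Finset.analyticAt_fun_sum _ fun t _ => analyticAt_const.mul (analyticAt_id.pow _)
  · exact Finset.analyticAt_fun_sum _ fun t _ => analyticAt_id.pow _

theorem deriv_tgMeanDiv_zero {κ : ℕ} (hκ : 2 ≤ κ) : deriv (tgMeanDiv κ) 0 = 1 := by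
  have hN : HasDerivAt (fun q : ℝ => ∑ t ∈ Finset.range (κ + 1), (t : ℝ) * q ^ (t - 1))
      (∑ t ∈ Finset.range (κ + 1), (t : ℝ) * (((t - 1 : ℕ) : ℝ) * 0 ^ (t - 1 - 1))) 0 :=
    HasDerivAt.fun_sum fun t _ => (hasDerivAt_pow (t - 1) (0 : ℝ)).const_mul _
  have := (hN.div (hasDerivAt_sum_range_pow κ 0) (sum_range_pow_pos κ le_rfl).ne').deriv
  refine this.trans ?_
  obtain ⟨k, rfl⟩ := Nat.exists_eq_add_of_le' hκ
  simp [Finset.sum_range_succ']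

theorem exists_strictConcaveOn_tgQ {κ : ℕ} (hκ : 2 ≤ κ) :
    ∃ (c : ℝ) (ψ : ℝ → ℝ), 0 < c ∧ ψ 0 = 0 ∧ StrictConcaveOn ℝ (Set.Ico 0 c) ψ ∧
      ∀ x ∈ Set.Ioo 0 c, 0 < tgQ κ x ∧ tgMean κ (tgQ κ x) = x ∧
        HasDerivAt (tgQ κ) (ψ x * tgQ κ x / x ^ 2) x := by
  obtain ⟨a, D, P, R, ha, hP0, hcalc, hR⟩ := exists_strictAntiOn_ratio
    (analyticAt_tgMeanDiv κ) (tgMeanDiv_zero hκ) (deriv_tgMeanDiv_zero hκ)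
  have hMeq : tgMean κ = fun q => q * tgMeanDiv κ q := funext (tgMean_eq_mul_tgMeanDiv κ)
  have hMd : ∀ q ∈ Set.Icc 0 a, HasDerivAt (tgMean κ) (D q) q := fun q hq => by
    rw [hMeq]; exact (hcalc q hq).1
  have hM0 : tgMean κ 0 = 0 := by simp [hMeq]
  have hMc : ContinuousOn (tgMean κ) (Set.Icc 0 a) := fun q hq =>
    (hMd q hq).continuousAt.continuousWithinAt
  have hM : StrictMonoOn (tgMean κ) (Set.Icc 0 a) :=
    strictMonoOn_of_deriv_pos (convex_Icc _ _) hMc fun q hq => by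
      rw [(hMd q (interior_subset hq)).deriv]
      exact (hcalc q (interior_subset hq)).2.1
  obtain ⟨hsurj, hmono, hQ0, hQc⟩ := continuousAt_of_leftInverse_strictMonoOn (Q := tgQ κ) ha hM0 hM hMc
    (fun q hq => sInf_le_eq_of_strictMonoOn hM hq : ∀ q ∈ Set.Icc 0 a, tgQ κ (tgMean κ q) = q)
  have h0 : (0 : ℝ) ∈ Set.Icc 0 a := ⟨le_rfl, ha.le⟩
  have hc : 0 < tgMean κ a := hM0 ▸ hM h0 ⟨ha.le, le_rfl⟩ ha
  have hQz : tgQ κ 0 = 0 := by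
    have : tgQ κ (tgMean κ 0) = 0 := sInf_le_eq_of_strictMonoOn hM h0
    rwa [hM0] at this
  have hQd : ∀ x ∈ Set.Ioo 0 (tgMean κ a), HasDerivAt (tgQ κ) (D (tgQ κ x))⁻¹ x := by
    intro x hx
    have hm := (hsurj x (Set.Ioo_subset_Icc_self hx)).1
    refine HasDerivAt.of_local_left_inverse (hQc x hx) (hMd _ hm) (hcalc _ hm).2.1.ne' ?_
    filter_upwards [Ioo_mem_nhds hx.1 hx.2] with y hy
    exact (hsurj y (Set.Ioo_subset_Icc_self hy)).2
  have hψd : ∀ x ∈ Set.Ioo 0 (tgMean κ a),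
      HasDerivAt (fun x => P (tgQ κ x)) (R (tgQ κ x)) x := by
    intro x hx
    have hm := (hsurj x (Set.Ioo_subset_Icc_self hx)).1
    refine ((hcalc _ hm).2.2.2.comp x (hQd x hx)).congr_deriv ?_
    exact mul_inv_cancel_right₀ (hcalc _ hm).2.1.ne' _
  refine ⟨tgMean κ a, fun x => P (tgQ κ x), hc, by simp [hQz, hP0], ?_, fun x hx => ?_⟩
  · refine StrictAntiOn.strictConcaveOn_of_deriv (convex_Ico _ _) (fun x hx => ?_) ?_
    · rcases hx.1.eq_or_lt with rfl | hx0
      · have hPc : ContinuousAt P (tgQ κ 0) := by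
          rw [hQz]; exact (hcalc 0 h0).2.2.2.continuousAt
        exact (hPc.comp_continuousWithinAt hQ0).mono Set.Ico_subset_Ici_self
      · exact (hψd x ⟨hx0, hx.2⟩).continuousAt.continuousWithinAt
    · rw [interior_Ico]
      intro x hx y hy hxy
      have hx' := Set.Ioo_subset_Icc_self hx
      have hy' := Set.Ioo_subset_Icc_self hy
      rw [(hψd x hx).deriv, (hψd y hy).deriv]
      exact hR (hsurj x hx').1 (hsurj y hy').1 (hmono hx' hy' hxy)
  · have hx' := Set.Ioo_subset_Icc_self hx
    obtain ⟨hm, hMx⟩ := hsurj x hx'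
    have hpos : 0 < tgQ κ x := hQz ▸ hmono ⟨le_rfl, hc.le⟩ hx' hx.1
    refine ⟨hpos, hMx, (hQd x hx).congr_deriv ?_⟩
    have hD := (hcalc _ hm).2.1
    have hPD := (hcalc _ hm).2.2.1
    have hx2 : x = tgQ κ x * tgMeanDiv κ (tgQ κ x) := by
      rw [← tgMean_eq_mul_tgMeanDiv, hMx]
    have hxne : x ^ 2 ≠ 0 := pow_ne_zero 2 hx.1.ne'
    rw [inv_eq_one_div, div_eq_div_iff hD.ne' hxne]
    calc 1 * x ^ 2 = (tgQ κ x * tgMeanDiv κ (tgQ κ x)) ^ 2 := by rw [← hx2, one_mul]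
      _ = (tgQ κ x * tgMeanDiv κ (tgQ κ x) ^ 2) * tgQ κ x := by ring
      _ = _ := by rw [← hPD]; ring

theorem hasDerivAt_Hmax {κ : ℕ} {x d : ℝ}
    (hQ : ∀ᶠ y in nhds x, 0 < tgQ κ y ∧ tgMean κ (tgQ κ y) = y) (hd : HasDerivAt (tgQ κ) d x) :
    HasDerivAt (Hmax κ) (-Real.log (tgQ κ x)) x := by
  obtain ⟨hpos, hMx⟩ := hQ.self_of_nhds
  have hB := sum_range_pow_pos κ hpos.le
  have heq : Hmax κ =ᶠ[nhds x] fun y =>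
      Real.log (∑ t ∈ Finset.range (κ + 1), tgQ κ y ^ t) - y * Real.log (tgQ κ y) := by
    filter_upwards [hQ] with y hy
    rw [Hmax_natCast κ hy.1.le, hy.2]
  refine HasDerivAt.congr_of_eventuallyEq ?_ heq
  have h1 := (((hasDerivAt_sum_range_pow κ (tgQ κ x)).comp x hd).log hB.ne').sub
    ((hasDerivAt_id x).mul (hd.log hpos.ne'))
  refine h1.congr_deriv ?_
  have hx : x * (∑ t ∈ Finset.range (κ + 1), tgQ κ x ^ t) =
      tgQ κ x * ∑ t ∈ Finset.range (κ + 1), (t : ℝ) * tgQ κ x ^ (t - 1) := by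
    rw [← sum_range_natCast_mul_pow, eq_comm, ← div_eq_iff hB.ne', ← tgMean_natCast, hMx]
  simp only [Function.comp_apply, id]
  field_simp
  linear_combination (-d) * hx

theorem StrictConcaveOn.sum_lt_card_mul {s : Set ℝ} {ψ : ℝ → ℝ} (hψ : StrictConcaveOn ℝ s ψ)
    {n : ℕ} (hn : 0 < n) {y : Fin n → ℝ} (hy : ∀ j, y j ∈ s) (hne : ¬∀ j j', y j = y j') :
    ∑ j, ψ (y j) < n * ψ ((∑ j, y j) / n) := by
  have hn' : (0 : ℝ) < n := by exact_mod_cast hn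
  push Not at hne
  obtain ⟨j, j', hjj⟩ := hne
  have := hψ.lt_map_sum (t := Finset.univ) (w := fun _ : Fin n => (n : ℝ)⁻¹) (p := y)
    (fun _ _ => by positivity) (by simp [hn'.ne']) (fun i _ => hy i)
    ⟨j, Finset.mem_univ _, j', Finset.mem_univ _, hjj⟩
  simp only [smul_eq_mul, ← Finset.mul_sum] at this
  rwa [inv_mul_eq_div, inv_mul_eq_div, div_lt_iff₀' hn'] at this

theorem ConcaveOn.sum_le_card_mul {s : Set ℝ} {ψ : ℝ → ℝ} (hψ : ConcaveOn ℝ s ψ)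
    {n : ℕ} (hn : 0 < n) {y : Fin n → ℝ} (hy : ∀ j, y j ∈ s) :
    ∑ j, ψ (y j) ≤ n * ψ ((∑ j, y j) / n) := by
  have hn' : (0 : ℝ) < n := by exact_mod_cast hn
  have := hψ.le_map_sum (t := Finset.univ) (w := fun _ : Fin n => (n : ℝ)⁻¹) (p := y)
    (fun _ _ => by positivity) (by simp [hn'.ne']) (fun i _ => hy i)
  simp only [smul_eq_mul, ← Finset.mul_sum] at this
  rwa [inv_mul_eq_div, inv_mul_eq_div, div_le_iff₀' hn'] at this

/-- **Lemma (concavity of the entropy-loss function `J`).** For `κ ≥ 2` there is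
`δ = δ(κ) ∈ (0,1)` such that `J(r) = n H^max_κ(r/n) - ∑_j H^max_κ(r α_j)` is concave on
`(0, δκ/max_j α_j]`, strictly so when the `α_j` are not all equal. -/
theorem entropyLoss_concave (κ : ℕ) (hκ : 2 ≤ κ) :
    ∃ δ : ℝ, δ ∈ Set.Ioo (0 : ℝ) 1 ∧
      ∀ (n : ℕ), 0 < n → ∀ α : Fin n → ℝ, (∀ j, 0 ≤ α j) → ∑ j, α j = 1 →
        ConcaveOn ℝ (Set.Ioc (0 : ℝ) (δ * κ / ⨆ j, α j))
          (fun r => (n : ℝ) * Hmax (κ : ℕ∞) (r / n) - ∑ j, Hmax (κ : ℕ∞) (r * α j)) ∧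
        (¬(∀ j j', α j = α j') →
          StrictConcaveOn ℝ (Set.Ioc (0 : ℝ) (δ * κ / ⨆ j, α j))
            (fun r => (n : ℝ) * Hmax (κ : ℕ∞) (r / n) -
              ∑ j, Hmax (κ : ℕ∞) (r * α j))) := by
  obtain ⟨c, ψ, hc, hψ0, hψ, hQ⟩ := exists_strictConcaveOn_tgQ hκ
  have hκ' : (0 : ℝ) < κ := by exact_mod_cast (by omega : 0 < κ)
  refine ⟨min (1 / 2) (c / (2 * κ)), ⟨by positivity, by
    linarith [min_le_left (1 / 2 : ℝ) (c / (2 * κ))]⟩, fun n hn α hα hsum => ?_⟩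
  have hδ : min (1 / 2) (c / (2 * κ)) * κ < c := by
    calc min (1 / 2) (c / (2 * κ)) * κ ≤ c / (2 * κ) * κ := by gcongr; exact min_le_right _ _
      _ = c / 2 := by field_simp
      _ < c := by linarith
  set b := min (1 / 2) (c / (2 * κ)) * κ / ⨆ j, α j with hb
  have hn' : (0 : ℝ) < n := by exact_mod_cast hn
  have hle : ∀ j, α j ≤ ⨆ j, α j := le_ciSup (Set.finite_range α).bddAbove
  have hnS : 1 ≤ n * ⨆ j, α j := by
    calc (1 : ℝ) = ∑ j, α j := hsum.symm
      _ ≤ ∑ _j : Fin n, ⨆ j, α j := Finset.sum_le_sum fun j _ => hle j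
      _ = _ := by simp
  have hS : 0 < ⨆ j, α j := by
    by_contra! h
    linarith [mul_nonpos_of_nonneg_of_nonpos hn'.le h]
  have hbound : ∀ r ∈ Set.Ioc 0 b, ∀ u, u ≤ ⨆ j, α j → r * u < c := fun r hr u hu =>
    calc r * u ≤ r * ⨆ j, α j := mul_le_mul_of_nonneg_left hu hr.1.le
      _ ≤ b * ⨆ j, α j := mul_le_mul_of_nonneg_right hr.2 hS.le
      _ < c := by rw [hb, div_mul_cancel₀ _ hS.ne']; exact hδ
  have hrn : ∀ r ∈ Set.Ioc 0 b, r / n ∈ Set.Ioo 0 c := fun r hr =>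
    ⟨div_pos hr.1 hn', by
      rw [div_eq_mul_inv]
      exact hbound r hr _ ((inv_le_iff_one_le_mul₀' hn').2 hnS)⟩
  have hH : ∀ x ∈ Set.Ioo 0 c, HasDerivAt (Hmax κ) (-Real.log (tgQ κ x)) x := fun x hx =>
    hasDerivAt_Hmax (by
      filter_upwards [Ioo_mem_nhds hx.1 hx.2] with y hy
      exact ⟨(hQ y hy).1, (hQ y hy).2.1⟩) (hQ x hx).2.2
  have hlog : ∀ x ∈ Set.Ioo 0 c, HasDerivAt (fun x => Real.log (tgQ κ x)) (ψ x / x ^ 2) x :=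
    fun x hx => ((hQ x hx).2.2.log (hQ x hx).1.ne').congr_deriv (by
      have := (hQ x hx).1.ne'
      field_simp)
  set J : ℝ → ℝ := fun r => (n : ℝ) * Hmax κ (r / n) - ∑ j, Hmax κ (r * α j) with hJ
  set J' : ℝ → ℝ := fun r => -Real.log (tgQ κ (r / n)) +
    ∑ j, α j * Real.log (tgQ κ (r * α j)) with hJ'
  have hd1 : ∀ r ∈ Set.Ioc 0 b, HasDerivAt J (J' r) r := by
    intro r hr
    have h1 := ((hH _ (hrn r hr)).comp r ((hasDerivAt_id r).div_const (n : ℝ))).const_mul (n : ℝ)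
    have h2 : ∀ j ∈ Finset.univ, HasDerivAt (fun r => Hmax κ (r * α j))
        (-(α j * Real.log (tgQ κ (r * α j)))) r := by
      intro j _
      rcases (hα j).eq_or_lt with h | h
      · simp only [← h, mul_zero, zero_mul, neg_zero]
        exact hasDerivAt_const r _
      · have := (hH (r * α j) ⟨mul_pos hr.1 h, hbound r hr _ (hle j)⟩).comp r
          ((hasDerivAt_id r).mul_const (α j))
        exact this.congr_deriv (by ring)
    refine (h1.sub (HasDerivAt.fun_sum h2)).congr_deriv ?_
    simp only [hJ', Finset.sum_neg_distrib]
    field_simp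
    ring
  have hd2 : ∀ r ∈ Set.Ioc 0 b,
      HasDerivAt J' ((∑ j, ψ (r * α j) - n * ψ (r / n)) / r ^ 2) r := by
    intro r hr
    have hr0 : r ≠ 0 := hr.1.ne'
    have h1 := ((hlog _ (hrn r hr)).comp r ((hasDerivAt_id r).div_const (n : ℝ))).neg
    have h2 : ∀ j ∈ Finset.univ, HasDerivAt (fun r => α j * Real.log (tgQ κ (r * α j)))
        (ψ (r * α j) / r ^ 2) r := by
      intro j _
      rcases (hα j).eq_or_lt with h | h
      · simp only [← h, mul_zero, zero_mul, hψ0, zero_div]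
        exact hasDerivAt_const r _
      · have hαj := h.ne'
        have := ((hlog (r * α j) ⟨mul_pos hr.1 h, hbound r hr _ (hle j)⟩).comp r
          ((hasDerivAt_id r).mul_const (α j))).const_mul (α j)
        refine this.congr_deriv ?_
        field_simp
    refine (h1.add (HasDerivAt.fun_sum h2)).congr_deriv ?_
    rw [← Finset.sum_div]
    field_simp
    ring
  have hmem : ∀ r ∈ Set.Ioc 0 b, ∀ j, r * α j ∈ Set.Ico 0 c := fun r hr j =>
    ⟨mul_nonneg hr.1.le (hα j), hbound r hr _ (hle j)⟩
  have hsumr : ∀ r : ℝ, ∑ j, r * α j = r := fun r => by rw [← Finset.mul_sum, hsum, mul_one]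
  have hcont : ContinuousOn J (Set.Ioc 0 b) := fun r hr =>
    (hd1 r hr).continuousAt.continuousWithinAt
  have hint : ∀ r ∈ interior (Set.Ioc 0 b), r ∈ Set.Ioc 0 b := fun r hr => interior_subset hr
  refine ⟨?_, fun hne => ?_⟩
  · refine concaveOn_of_hasDerivWithinAt2_nonpos (convex_Ioc _ _) hcont
      (fun r hr => (hd1 r (hint r hr)).hasDerivWithinAt)
      (fun r hr => (hd2 r (hint r hr)).hasDerivWithinAt) fun r hr => ?_
    have := hψ.concaveOn.sum_le_card_mul hn (hmem r (hint r hr))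
    rw [hsumr] at this
    exact div_nonpos_of_nonpos_of_nonneg (by linarith) (sq_nonneg r)
  · refine strictConcaveOn_of_deriv2_neg (convex_Ioc _ _) hcont fun r hr => ?_
    have hr' := hint r hr
    have heq : deriv J =ᶠ[nhds r] J' := by
      filter_upwards [isOpen_interior.mem_nhds hr] with y hy
      exact (hd1 y (hint y hy)).deriv
    have h2 : deriv^[2] J r = (∑ j, ψ (r * α j) - n * ψ (r / n)) / r ^ 2 :=
      heq.deriv_eq.trans (hd2 r hr').deriv
    have := hψ.sum_lt_card_mul hn (hmem r hr') fun h => hne fun j j' =>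
      mul_left_cancel₀ hr'.1.ne' (h j j')
    rw [hsumr] at this
    rw [h2]
    exact div_neg_of_neg_of_pos (by linarith) (pow_pos hr'.1 2)
end

section
/- Let κ ≥ 2 be an integer. There exists δ = δ(κ) ∈ (0,1), depending only on κ, such that for all R ∈ ℤ_{≥0}^m, C ∈ ℤ_{≥0}^n with |R| = |C| = N > 0 and (max_{1≤i≤m} r_i)(max_{1≤j≤n} c_j) < δκN, one has mn·H^max_κ(N/(mn)) − m·Σ_{j=1}^n H^max_κ(c_j/m) ≥ n·Σ_{i=1}^m H^max_κ(r_i/n) − Σ_{i=1}^m Σ_{j=1}^n H^max_κ(r_i c_j / N), with strict inequality if neither R nor C is a constant vector. -/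
open Real Filter Finset

/-- If `q + q² + q³ E(q)` is the mean of a one-parameter family and `D` its derivative, then
minus squared mean over `q D(q)`, as a function of the mean, has increasing derivative near `0`. -/
theorem exists_strictMonoOn_slope {E : ℝ → ℝ} (hE : AnalyticAt ℝ E 0) :
    ∃ ε > 0, ∃ D k L : ℝ → ℝ, k 0 = 0 ∧ StrictMonoOn L (Set.Icc 0 ε) ∧
      ∀ q ∈ Set.Icc 0 ε, 0 < D q ∧
        HasDerivAt (fun q => q + q ^ 2 + q ^ 3 * E q) (D q) q ∧
        HasDerivAt k (L q * D q) q ∧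
        k q * (q * D q) = -(q + q ^ 2 + q ^ 3 * E q) ^ 2 := by
  set D : ℝ → ℝ := fun q => 1 + 2 * q + q ^ 2 * (3 * E q + q * deriv E q) with hDdef
  set G : ℝ → ℝ := fun q =>
    (1 + 2 * E q + 2 * q * E q + q ^ 2 * E q ^ 2 - 3 * E q - q * deriv E q) / D q with hGdef
  set J : ℝ → ℝ := fun q => 3 * G q + q * deriv G q with hJdef
  set L : ℝ → ℝ := fun q => -(1 + q ^ 2 * J q) / D q with hLdef
  have hE' : AnalyticAt ℝ (deriv E) 0 := hE.deriv
  have hD0 : D 0 = 1 := by simp [hDdef]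
  have hD : AnalyticAt ℝ D 0 := by simp only [hDdef]; fun_prop
  have hG : AnalyticAt ℝ G 0 := by
    simp only [hGdef]
    exact AnalyticAt.fun_div (by fun_prop) hD (by simp [hD0])
  have hG' : AnalyticAt ℝ (deriv G) 0 := hG.deriv
  have hJ : AnalyticAt ℝ J 0 := by simp only [hJdef]; fun_prop
  have hL : AnalyticAt ℝ L 0 := by
    simp only [hLdef]
    exact AnalyticAt.fun_div (by fun_prop) hD (by simp [hD0])
  have dD : HasDerivAt D 2 0 := by
    have hB : AnalyticAt ℝ (fun q => 3 * E q + q * deriv E q) 0 := by fun_prop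
    have := (((hasDerivAt_id (0 : ℝ)).const_mul 2).const_add 1).fun_add
      (((hasDerivAt_id (0 : ℝ)).fun_pow 2).fun_mul hB.differentiableAt.hasDerivAt)
    simpa [hDdef] using this
  have dL : HasDerivAt L 2 0 := by
    have := ((((hasDerivAt_id (0 : ℝ)).fun_pow 2).fun_mul
      hJ.differentiableAt.hasDerivAt).const_add 1).fun_neg.fun_div dD (by simp [hD0])
    simpa [hLdef, hD0] using this
  have hpos : ∀ᶠ q in nhds (0 : ℝ), 0 < D q ∧ 0 < deriv L q ∧ AnalyticAt ℝ L q ∧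
      AnalyticAt ℝ E q ∧ AnalyticAt ℝ G q := by
    have h1 := hD.continuousAt.eventually_const_lt (show 0 < D 0 by simp [hD0])
    have h2 := hL.deriv.continuousAt.eventually_const_lt (show 0 < deriv L 0 by simp [dL.deriv])
    filter_upwards [h1, h2, hL.eventually_analyticAt, hE.eventually_analyticAt,
      hG.eventually_analyticAt] with q a b c d e using ⟨a, b, c, d, e⟩
  obtain ⟨ε, hε, hball⟩ := Metric.nhds_basis_closedBall.eventually_iff.1 hpos
  have hmem : ∀ q ∈ Set.Icc 0 ε, q ∈ Metric.closedBall (0 : ℝ) ε := by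
    intro q hq
    rw [Metric.mem_closedBall, Real.dist_eq, sub_zero, abs_of_nonneg hq.1]
    exact hq.2
  refine ⟨ε, hε, D, fun q => -q - q ^ 3 * G q, L, by simp, ?_, ?_⟩
  · refine strictMonoOn_of_deriv_pos (convex_Icc _ _) ?_ ?_
    · exact fun q hq => (hball (hmem q hq)).2.2.1.continuousAt.continuousWithinAt
    · exact fun q hq => (hball (hmem q (interior_subset hq))).2.1
  · intro q hq
    obtain ⟨h1, -, -, hEq, hGq⟩ := hball (hmem q hq)
    refine ⟨h1, ?_, ?_, ?_⟩
    · have := ((hasDerivAt_id q).fun_add ((hasDerivAt_id q).fun_pow 2)).fun_add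
        (((hasDerivAt_id q).fun_pow 3).fun_mul hEq.differentiableAt.hasDerivAt)
      refine this.congr_deriv ?_
      simp [hDdef]
      ring
    · have := (hasDerivAt_id q).fun_neg.fun_sub
        (((hasDerivAt_id q).fun_pow 3).fun_mul hGq.differentiableAt.hasDerivAt)
      refine this.congr_deriv ?_
      simp only [hLdef, hJdef]
      rw [div_mul_cancel₀ _ h1.ne']
      simp
      ring
    · have hGD : G q * D q =
          1 + 2 * E q + 2 * q * E q + q ^ 2 * E q ^ 2 - 3 * E q - q * deriv E q := by
        simp only [hGdef]
        rw [div_mul_cancel₀ _ h1.ne']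
      have : (-q - q ^ 3 * G q) * (q * D q) = -q ^ 2 * D q - q ^ 4 * (G q * D q) := by ring
      rw [this, hGD]
      simp only [hDdef]
      ring

/-- Convexity of the averaged dilation `a ↦ ∑ j, H (a wⱼ) - n H (a / n)`, where `x² H''(x)`
is a strictly convex function of `x`. -/
theorem convexOn_sum_dilation_sub {H H₁ H₂ h : ℝ → ℝ} {x₀ : ℝ}
    (hH : ContinuousOn H (Set.Icc 0 x₀))
    (hH₁ : ∀ x ∈ Set.Ioo 0 x₀, HasDerivAt H (H₁ x) x)
    (hH₂ : ∀ x ∈ Set.Ioo 0 x₀, HasDerivAt H₁ (H₂ x) x)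
    (hh : StrictConvexOn ℝ (Set.Icc 0 x₀) h) (hh0 : h 0 = 0)
    (hhH : ∀ x ∈ Set.Ioo 0 x₀, h x = x ^ 2 * H₂ x)
    {n : ℕ} {w : Fin n → ℝ} (hw : ∀ j, 0 ≤ w j) (hw1 : ∑ j, w j = 1)
    {X : ℝ} (hX : ∀ j, X * w j < x₀) :
    ConvexOn ℝ (Set.Icc 0 X) (fun a => ∑ j, H (a * w j) - n * H (a / n)) ∧
    ((¬ ∀ j j', w j = w j') →
      StrictConvexOn ℝ (Set.Icc 0 X) (fun a => ∑ j, H (a * w j) - n * H (a / n))) := by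
  have hn : 0 < n := by
    rcases Nat.eq_zero_or_pos n with rfl | h
    · simp at hw1
    · exact h
  have hn' : (0 : ℝ) < n := by exact_mod_cast hn
  have : Nonempty (Fin n) := ⟨⟨0, hn⟩⟩
  have hlt : ∀ a ∈ Set.Icc 0 X, ∀ j, a * w j < x₀ := fun a ha j =>
    (mul_le_mul_of_nonneg_right ha.2 (hw j)).trans_lt (hX j)
  have hltn : ∀ a ∈ Set.Icc 0 X, a / n < x₀ := by
    intro a ha
    rw [div_lt_iff₀ hn']
    have := Finset.sum_lt_sum_of_nonempty (s := Finset.univ) Finset.univ_nonempty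
      (fun j _ => hlt a ha j)
    rw [← Finset.mul_sum, hw1] at this
    simpa [mul_comm] using this
  have hcont : ContinuousOn (fun a => ∑ j, H (a * w j) - n * H (a / n)) (Set.Icc 0 X) := by
    refine ContinuousOn.sub (continuousOn_finsetSum _ fun j _ => ?_) (ContinuousOn.mul
      continuousOn_const ?_)
    · exact hH.comp (by fun_prop) fun a ha => ⟨mul_nonneg ha.1 (hw j), (hlt a ha j).le⟩
    · exact hH.comp (by fun_prop) fun a ha => ⟨div_nonneg ha.1 hn'.le, (hltn a ha).le⟩
  have hder : ∀ {f f' : ℝ → ℝ}, (∀ x ∈ Set.Ioo 0 x₀, HasDerivAt f (f' x) x) →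
      ∀ a ∈ Set.Ioo 0 X, ∀ j, HasDerivAt (fun a => f (a * w j)) (w j * f' (a * w j)) a := by
    intro f f' hf a ha j
    rcases (hw j).eq_or_lt with h0 | h0
    · simpa [← h0] using hasDerivAt_const a (f 0)
    · have := (hf (a * w j) ⟨mul_pos ha.1 h0, hlt a ⟨ha.1.le, ha.2.le⟩ j⟩).comp a
        ((hasDerivAt_id a).mul_const (w j))
      simpa [Function.comp_def, mul_comm] using this
  have hdern : ∀ {f f' : ℝ → ℝ}, (∀ x ∈ Set.Ioo 0 x₀, HasDerivAt f (f' x) x) →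
      ∀ a ∈ Set.Ioo 0 X, HasDerivAt (fun a => f (a / n)) (f' (a / n) / n) a := by
    intro f f' hf a ha
    have := (hf (a / n) ⟨div_pos ha.1 hn', hltn a ⟨ha.1.le, ha.2.le⟩⟩).comp a
        ((hasDerivAt_id a).div_const (n : ℝ))
    simpa [Function.comp_def, div_eq_mul_inv] using this
  have hd1 : ∀ a ∈ Set.Ioo 0 X, HasDerivAt (fun a => ∑ j, H (a * w j) - n * H (a / n))
      (∑ j, w j * H₁ (a * w j) - H₁ (a / n)) a := by
    intro a ha
    have := (HasDerivAt.fun_sum fun j (_ : j ∈ Finset.univ) => hder hH₁ a ha j).fun_sub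
      ((hdern hH₁ a ha).const_mul (n : ℝ))
    rwa [mul_div_cancel₀ _ hn'.ne'] at this
  have hd2 : ∀ a ∈ Set.Ioo 0 X, HasDerivAt (fun a => ∑ j, w j * H₁ (a * w j) - H₁ (a / n))
      (∑ j, w j * (w j * H₂ (a * w j)) - H₂ (a / n) / n) a := fun a ha =>
    (HasDerivAt.fun_sum fun j (_ : j ∈ Finset.univ) =>
      (hder hH₂ a ha j).const_mul (w j)).fun_sub (hdern hH₂ a ha)
  have hkey : ∀ a ∈ Set.Ioo 0 X, a ^ 2 * (∑ j, w j * (w j * H₂ (a * w j)) - H₂ (a / n) / n) =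
      n * (∑ j, (1 / (n : ℝ)) • h (a * w j) - h (∑ j, (1 / (n : ℝ)) • (a * w j))) := by
    intro a ha
    have e1 : ∑ j, (1 / (n : ℝ)) • (a * w j) = a / n := by
      simp only [smul_eq_mul]
      rw [← Finset.mul_sum, ← Finset.mul_sum, hw1]
      ring
    have e2 : ∀ j, h (a * w j) = a ^ 2 * (w j * (w j * H₂ (a * w j))) := by
      intro j
      rcases (hw j).eq_or_lt with h0 | h0
      · simp [← h0, hh0]
      · rw [hhH _ ⟨mul_pos ha.1 h0, hlt a ⟨ha.1.le, ha.2.le⟩ j⟩]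
        ring
    rw [e1, hhH (a / n) ⟨div_pos ha.1 hn', hltn a ⟨ha.1.le, ha.2.le⟩⟩]
    simp only [smul_eq_mul]
    rw [← Finset.mul_sum, Finset.sum_congr rfl fun j _ => e2 j, ← Finset.mul_sum]
    field_simp
  have hsum1 : ∑ _j : Fin n, 1 / (n : ℝ) = 1 := by simp [hn'.ne']
  have hmem : ∀ a ∈ Set.Ioo 0 X, ∀ j ∈ Finset.univ, a * w j ∈ Set.Icc 0 x₀ := fun a ha j _ =>
    ⟨mul_nonneg ha.1.le (hw j), (hlt a ⟨ha.1.le, ha.2.le⟩ j).le⟩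
  constructor
  · refine convexOn_of_hasDerivWithinAt2_nonneg (convex_Icc _ _) hcont
      (fun a ha => (hd1 a (by simpa using ha)).hasDerivWithinAt)
      (fun a ha => (hd2 a (by simpa using ha)).hasDerivWithinAt) fun a ha => ?_
    rw [interior_Icc] at ha
    refine nonneg_of_mul_nonneg_right (a := a ^ 2) ?_ (pow_pos ha.1 2)
    rw [hkey a ha]
    exact mul_nonneg hn'.le (sub_nonneg.2 (hh.convexOn.map_sum_le
      (fun _ _ => by positivity) hsum1 (hmem a ha)))
  · intro hne
    refine strictConvexOn_of_deriv2_pos (convex_Icc _ _) hcont fun a ha => ?_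
    rw [interior_Icc] at ha
    have hd : deriv^[2] (fun a => ∑ j, H (a * w j) - n * H (a / n)) a =
        ∑ j, w j * (w j * H₂ (a * w j)) - H₂ (a / n) / n := by
      refine HasDerivAt.deriv ((hd2 a ha).congr_of_eventuallyEq ?_)
      filter_upwards [Ioo_mem_nhds ha.1 ha.2] with b hb using (hd1 b hb).deriv
    rw [hd]
    refine pos_of_mul_pos_right (a := a ^ 2) ?_ (pow_pos ha.1 2).le
    rw [hkey a ha]
    push Not at hne
    obtain ⟨j, j', hjj⟩ := hne
    exact mul_pos hn' (sub_pos.2 (hh.map_sum_lt (fun _ _ => by positivity) hsum1 (hmem a ha)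
      ⟨j, Finset.mem_univ _, j', Finset.mem_univ _,
        fun h => hjj (mul_left_cancel₀ ha.1.ne' h)⟩))

/-- The entropy-loss inequality for any `H` for which `x² H''(x)` is strictly convex. -/
theorem sum_dilation_inequality {H H₁ H₂ h : ℝ → ℝ} {x₀ : ℝ}
    (hH : ContinuousOn H (Set.Icc 0 x₀))
    (hH₁ : ∀ x ∈ Set.Ioo 0 x₀, HasDerivAt H (H₁ x) x)
    (hH₂ : ∀ x ∈ Set.Ioo 0 x₀, HasDerivAt H₁ (H₂ x) x)
    (hh : StrictConvexOn ℝ (Set.Icc 0 x₀) h) (hh0 : h 0 = 0)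
    (hhH : ∀ x ∈ Set.Ioo 0 x₀, h x = x ^ 2 * H₂ x)
    {m n N : ℕ} {R : Fin m → ℕ} {C : Fin n → ℕ} (hR : ∑ i, R i = N) (hC : ∑ j, C j = N)
    (hN : 0 < N) (hRC : (⨆ i, (R i : ℝ)) * (⨆ j, (C j : ℝ)) < x₀ * N) :
    ((n : ℝ) * ∑ i, H ((R i : ℝ) / n) - ∑ i, ∑ j, H ((R i : ℝ) * (C j : ℝ) / N) ≤
      (m : ℝ) * n * H ((N : ℝ) / (m * n)) - (m : ℝ) * ∑ j, H ((C j : ℝ) / m)) ∧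
    ((¬ ∀ i i', R i = R i') → (¬ ∀ j j', C j = C j') →
      (n : ℝ) * ∑ i, H ((R i : ℝ) / n) - ∑ i, ∑ j, H ((R i : ℝ) * (C j : ℝ) / N) <
        (m : ℝ) * n * H ((N : ℝ) / (m * n)) - (m : ℝ) * ∑ j, H ((C j : ℝ) / m)) := by
  have hN' : (0 : ℝ) < N := by exact_mod_cast hN
  have hm : 0 < m := by
    rcases Nat.eq_zero_or_pos m with rfl | h
    · simp at hR; omega
    · exact h
  have hm' : (0 : ℝ) < m := by exact_mod_cast hm
  have hR' : ∑ i, (R i : ℝ) = N := by exact_mod_cast hR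
  have hC' : ∑ j, (C j : ℝ) = N := by exact_mod_cast hC
  have hRle : ∀ i, (R i : ℝ) ≤ ⨆ i, (R i : ℝ) := le_ciSup (Set.finite_range _).bddAbove
  have hCle : ∀ j, (C j : ℝ) ≤ ⨆ j, (C j : ℝ) := le_ciSup (Set.finite_range _).bddAbove
  have hXnonneg : 0 ≤ ⨆ i, (R i : ℝ) := Real.iSup_nonneg fun i => Nat.cast_nonneg _
  have hconv := convexOn_sum_dilation_sub hH hH₁ hH₂ hh hh0 hhH
    (w := fun j => (C j : ℝ) / N) (X := ⨆ i, (R i : ℝ)) (fun j => by positivity)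
    (by rw [← Finset.sum_div, hC', div_self hN'.ne'])
    (fun j => by
      rw [← mul_div_assoc, div_lt_iff₀ hN']
      exact (mul_le_mul_of_nonneg_left (hCle j) hXnonneg).trans_lt hRC)
  have hsum1 : ∑ _i : Fin m, 1 / (m : ℝ) = 1 := by simp [hm'.ne']
  have hmem : ∀ i ∈ Finset.univ, (R i : ℝ) ∈ Set.Icc 0 (⨆ i, (R i : ℝ)) :=
    fun i _ => ⟨Nat.cast_nonneg _, hRle i⟩
  have e1 : ∑ i, (1 / (m : ℝ)) • (R i : ℝ) = N / m := by
    simp only [smul_eq_mul]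
    rw [← Finset.mul_sum, hR']
    ring
  have e2 : ∀ f : ℝ → ℝ, (m : ℝ) * ∑ i, (1 / (m : ℝ)) • f (R i) = ∑ i, f (R i) := by
    intro f
    simp only [smul_eq_mul]
    rw [← Finset.mul_sum, ← mul_assoc, mul_one_div_cancel hm'.ne', one_mul]
  have e3 : ∀ j, (N : ℝ) / m * (C j / N) = C j / m := fun j => by field_simp
  have e4 : (N : ℝ) / m / n = N / (m * n) := by rw [div_div]
  constructor
  · have := mul_le_mul_of_nonneg_left
      (hconv.1.map_sum_le (fun _ _ => by positivity) hsum1 hmem) hm'.le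
    rw [e2 (fun a => ∑ j, H (a * (C j / N)) - n * H (a / n)), e1] at this
    simp only [e3, e4, Finset.sum_sub_distrib, ← Finset.mul_sum, mul_sub, ← mul_div_assoc] at this
    linarith
  · intro hRne hCne
    push Not at hRne
    obtain ⟨i, i', hii⟩ := hRne
    have hwne : ¬ ∀ j j', (C j : ℝ) / N = C j' / N := by
      intro hall
      refine hCne fun j j' => ?_
      have := hall j j'
      rw [div_left_inj' hN'.ne'] at this
      exact_mod_cast this
    have := mul_lt_mul_of_pos_left
      ((hconv.2 hwne).map_sum_lt (fun _ _ => by positivity) hsum1 hmem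
        ⟨i, Finset.mem_univ _, i', Finset.mem_univ _, by exact_mod_cast hii⟩) hm'
    rw [e2 (fun a => ∑ j, H (a * (C j / N)) - n * H (a / n)), e1] at this
    simp only [e3, e4, Finset.sum_sub_distrib, ← Finset.mul_sum, mul_sub, ← mul_div_assoc] at this
    linarith

/-- The mean of the truncated geometric distribution has the expansion `q + q² + O(q³)`. -/
theorem exists_tgMean_expansion {κ : ℕ} (hκ : 2 ≤ κ) :
    ∃ E : ℝ → ℝ, (∀ q, 0 ≤ q → AnalyticAt ℝ E q) ∧
      ∀ q, 0 ≤ q → tgMean (κ : ℕ∞) q = q + q ^ 2 + q ^ 3 * E q := by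
  obtain ⟨k, rfl⟩ : ∃ k, κ = k + 2 := ⟨κ - 2, by omega⟩
  set S : ℝ → ℝ := fun q => ∑ t ∈ range (k + 2 + 1), q ^ t with hS
  set U : ℝ → ℝ := fun q => ∑ t ∈ range (k + 1), q ^ t with hU
  set W : ℝ → ℝ := fun q => ∑ t ∈ range k, ((t : ℝ) + 3) * q ^ t with hW
  have hSpos : ∀ q, 0 ≤ q → 0 < S q := fun q hq => by
    simp only [hS]
    rw [Finset.sum_range_succ']
    positivity
  have hSU : ∀ q, S q = 1 + q + q ^ 2 * U q := fun q => by
    simp only [hS, hU]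
    rw [Finset.sum_range_succ', Finset.sum_range_succ', Finset.mul_sum,
      Finset.sum_congr rfl fun t _ => show q ^ (t + 1 + 1) = q ^ 2 * q ^ t by ring]
    ring
  have hT : ∀ q : ℝ, ∑ t ∈ range (k + 2 + 1), (t : ℝ) * q ^ t = q + 2 * q ^ 2 + q ^ 3 * W q :=
      fun q => by
    simp only [hW]
    rw [Finset.sum_range_succ', Finset.sum_range_succ', Finset.sum_range_succ', Finset.mul_sum,
      Finset.sum_congr rfl fun t _ => show ((t + 1 + 1 + 1 : ℕ) : ℝ) * q ^ (t + 1 + 1 + 1) =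
        q ^ 3 * (((t : ℝ) + 3) * q ^ t) by push_cast; ring]
    push_cast
    ring
  have aS : ∀ q, AnalyticAt ℝ S q := fun q => by simp only [hS]; fun_prop
  have aU : ∀ q, AnalyticAt ℝ U q := fun q => by simp only [hU]; fun_prop
  have aW : ∀ q, AnalyticAt ℝ W q := fun q => by simp only [hW]; fun_prop
  refine ⟨fun q => (W q - U q - 1 - q * U q) / S q, fun q hq => ?_, fun q hq => ?_⟩
  · have := aS q
    have := aU q
    have := aW q
    exact AnalyticAt.fun_div (by fun_prop) (aS q) (hSpos q hq).ne'
  · have h := (hSpos q hq).ne'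
    simp only [tgMean, ENat.natCast_ne_top, if_false, ENat.toNat_natCast]
    rw [hT, show ∑ t ∈ range (k + 2 + 1), q ^ t = S q from rfl]
    field_simp
    rw [hSU]
    ring

/-- The entropy of a truncated geometric distribution in terms of its ratio. -/
theorem Hmax_eq_of_tgQ_eq {κ : ℕ} {x q : ℝ} (hQ : tgQ (κ : ℕ∞) x = q) (hq : 0 ≤ q) :
    Hmax (κ : ℕ∞) x =
      Real.log (∑ t ∈ range (κ + 1), q ^ t) - tgMean (κ : ℕ∞) q * Real.log q := by
  have hSpos : 0 < ∑ t ∈ range (κ + 1), q ^ t := by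
    rw [Finset.sum_range_succ']
    positivity
  have hpmf : ∀ t ∈ range (κ + 1), tgPMF (κ : ℕ∞) x t =
      (∑ t ∈ range (κ + 1), q ^ t)⁻¹ * q ^ t := by
    intro t ht
    have : (t : ℕ∞) ≤ κ := by exact_mod_cast Nat.lt_succ_iff.1 (Finset.mem_range.1 ht)
    simp [tgPMF, this, tgP, hQ]
  have hout : ∀ t ∉ range (κ + 1), tgPMF (κ : ℕ∞) x t * Real.log (tgPMF (κ : ℕ∞) x t) = 0 := by
    intro t ht
    have : ¬ (t : ℕ∞) ≤ κ := by
      rw [Finset.mem_range] at ht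
      exact_mod_cast fun h : t ≤ κ => ht (Nat.lt_succ_of_le h)
    simp [tgPMF, this]
  rw [Hmax, tsum_eq_sum hout, Finset.sum_congr rfl fun t ht => by rw [hpmf t ht]]
  simp only [tgMean, ENat.natCast_ne_top, if_false, ENat.toNat_natCast]
  rcases hq.eq_or_lt with h0 | h0
  · subst h0
    rw [Finset.sum_range_succ']
    simp [Finset.sum_range_succ']
  · set S := ∑ t ∈ range (κ + 1), q ^ t with hS
    have hterm : ∀ t : ℕ, S⁻¹ * q ^ t * Real.log (S⁻¹ * q ^ t) =
        -(Real.log S / S) * q ^ t + Real.log q / S * (t * q ^ t) := by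
      intro t
      rw [Real.log_mul (by positivity) (by positivity), Real.log_inv, Real.log_pow]
      ring
    simp only [hterm]
    rw [Finset.sum_add_distrib, ← Finset.mul_sum, ← Finset.mul_sum, ← hS]
    field_simp
    ring

/-- For small `x`, `H^max_κ` is twice differentiable and `x² H''(x)` is strictly convex. -/
theorem exists_strictConvexOn_sq_mul_deriv2_Hmax {κ : ℕ} (hκ : 2 ≤ κ) :
    ∃ x₀ > 0, ∃ H₁ H₂ h : ℝ → ℝ, ContinuousOn (Hmax (κ : ℕ∞)) (Set.Icc 0 x₀) ∧
      (∀ x ∈ Set.Ioo 0 x₀, HasDerivAt (Hmax (κ : ℕ∞)) (H₁ x) x) ∧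
      (∀ x ∈ Set.Ioo 0 x₀, HasDerivAt H₁ (H₂ x) x) ∧
      StrictConvexOn ℝ (Set.Icc 0 x₀) h ∧ h 0 = 0 ∧
      ∀ x ∈ Set.Ioo 0 x₀, h x = x ^ 2 * H₂ x := by
  obtain ⟨E, hE, hME⟩ := exists_tgMean_expansion hκ
  obtain ⟨ε, hε, D, k, L, hk0, hL, hprop⟩ := exists_strictMonoOn_slope (hE 0 le_rfl)
  set P : ℝ → ℝ := fun q => q + q ^ 2 + q ^ 3 * E q with hP
  set Q : ℝ → ℝ := tgQ (κ : ℕ∞) with hQdef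
  have hP0 : P 0 = 0 := by simp [hP]
  have hPcont : ContinuousOn P (Set.Icc 0 ε) := fun q hq =>
    (hprop q hq).2.1.continuousAt.continuousWithinAt
  have hPmono : StrictMonoOn P (Set.Icc 0 ε) :=
    strictMonoOn_of_deriv_pos (convex_Icc _ _) hPcont fun q hq => by
      have := hprop q (interior_subset hq)
      rw [this.2.1.deriv]
      exact this.1
  have h0mem : (0 : ℝ) ∈ Set.Icc 0 ε := ⟨le_rfl, hε.le⟩
  have hεmem : ε ∈ Set.Icc 0 ε := ⟨hε.le, le_rfl⟩
  have hQP : ∀ q ∈ Set.Icc 0 ε, Q (P q) = q := by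
    intro q hq
    refine IsLeast.csInf_eq ⟨⟨hq.1, (hME q hq.1).ge⟩, fun r hr => ?_⟩
    by_contra! hlt
    have := hPmono ⟨hr.1, hlt.le.trans hq.2⟩ hq hlt
    exact absurd hr.2 (by rw [hME r hr.1]; exact not_le.2 this)
  have hPε : 0 < P ε := hP0 ▸ hPmono h0mem hεmem hε
  have hsurj : ∀ x ∈ Set.Icc 0 (P ε), ∃ q ∈ Set.Icc 0 ε, P q = x := by
    have := intermediate_value_Icc hε.le hPcont
    rw [hP0] at this
    exact this
  have hQmem : ∀ x ∈ Set.Icc 0 (P ε), Q x ∈ Set.Icc 0 ε ∧ P (Q x) = x := by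
    intro x hx
    obtain ⟨q, hq, rfl⟩ := hsurj x hx
    rw [hQP q hq]
    exact ⟨hq, rfl⟩
  have hQmono : StrictMonoOn Q (Set.Icc 0 (P ε)) := by
    intro x hx y hy hxy
    have hx' := hQmem x hx
    have hy' := hQmem y hy
    rwa [← hPmono.lt_iff_lt hx'.1 hy'.1, hx'.2, hy'.2]
  have hQ0 : Q 0 = 0 := by simpa [hP0] using hQP 0 h0mem
  have hQε : Q (P ε) = ε := hQP ε hεmem
  have hQimg : Q '' Set.Icc 0 (P ε) = Set.Icc 0 ε := by
    refine Set.Subset.antisymm (by rintro _ ⟨x, hx, rfl⟩; exact (hQmem x hx).1) fun q hq => ?_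
    refine ⟨P q, ⟨?_, hPmono.monotoneOn hq hεmem hq.2⟩, hQP q hq⟩
    exact hP0 ▸ hPmono.monotoneOn h0mem hq hq.1
  have hQIoo : ∀ x ∈ Set.Ioo 0 (P ε), Q x ∈ Set.Ioo 0 ε := by
    intro x hx
    have hx' : x ∈ Set.Icc 0 (P ε) := ⟨hx.1.le, hx.2.le⟩
    constructor
    · simpa [hQ0] using hQmono ⟨le_rfl, hPε.le⟩ hx' hx.1
    · simpa [hQε] using hQmono hx' ⟨hPε.le, le_rfl⟩ hx.2
  have hQcontAt : ∀ x ∈ Set.Ioo 0 (P ε), ContinuousAt Q x := by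
    intro x hx
    refine hQmono.continuousAt_of_image_mem_nhds (Icc_mem_nhds hx.1 hx.2) ?_
    rw [hQimg]
    exact Icc_mem_nhds (hQIoo x hx).1 (hQIoo x hx).2
  have hQcont : ContinuousOn Q (Set.Icc 0 (P ε / 2)) := by
    intro x hx
    rcases hx.1.eq_or_lt with h | h
    · subst h
      refine ContinuousWithinAt.mono ?_ Set.Icc_subset_Ici_self
      refine hQmono.continuousWithinAt_right_of_image_mem_nhdsWithin (Icc_mem_nhdsGE hPε) ?_
      rw [hQimg, hQ0]
      exact Icc_mem_nhdsGE hε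
    · exact (hQcontAt x ⟨h, hx.2.trans_lt (half_lt_self hPε)⟩).continuousWithinAt
  have hIcc : ∀ x ∈ Set.Icc 0 (P ε / 2), x ∈ Set.Icc 0 (P ε) := fun x hx =>
    ⟨hx.1, hx.2.trans (half_le_self hPε.le)⟩
  have hIoo : ∀ x ∈ Set.Ioo 0 (P ε / 2), x ∈ Set.Ioo 0 (P ε) := fun x hx =>
    ⟨hx.1, hx.2.trans (half_lt_self hPε)⟩
  have hQder : ∀ x ∈ Set.Ioo 0 (P ε), HasDerivAt Q (D (Q x))⁻¹ x := by
    intro x hx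
    have hq := hprop (Q x) ⟨(hQIoo x hx).1.le, (hQIoo x hx).2.le⟩
    refine HasDerivAt.of_local_left_inverse (hQcontAt x hx) hq.2.1 hq.1.ne' ?_
    filter_upwards [Icc_mem_nhds hx.1 hx.2] with y hy using (hQmem y hy).2
  have hHeq : ∀ x ∈ Set.Icc 0 (P ε), Hmax (κ : ℕ∞) x =
      Real.log (∑ t ∈ range (κ + 1), Q x ^ t) - x * Real.log (Q x) := by
    intro x hx
    have := hQmem x hx
    rw [Hmax_eq_of_tgQ_eq rfl this.1.1, hME _ this.1.1]
    exact congrArg (fun y => _ - y * _) this.2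
  have hSpos : ∀ q : ℝ, 0 ≤ q → 0 < ∑ t ∈ range (κ + 1), q ^ t := fun q hq => by
    rw [Finset.sum_range_succ']
    positivity
  refine ⟨P ε / 2, half_pos hPε, fun x => -Real.log (Q x),
    fun x => -((D (Q x))⁻¹ / Q x), fun x => k (Q x), ?_, ?_, ?_, ?_, by simp [hQ0, hk0], ?_⟩
  · have hEc : ContinuousOn (fun x => E (Q x)) (Set.Icc 0 (P ε / 2)) := fun x hx =>
      (hE (Q x) (hQmem x (hIcc x hx)).1.1).continuousAt.comp_continuousWithinAt (hQcont x hx)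
    have hlog : ContinuousOn (fun x => Real.log (∑ t ∈ range (κ + 1), Q x ^ t))
        (Set.Icc 0 (P ε / 2)) :=
      ContinuousOn.log (by fun_prop) fun x hx => (hSpos _ (hQmem x (hIcc x hx)).1.1).ne'
    have hql : ContinuousOn (fun x => Q x * Real.log (Q x)) (Set.Icc 0 (P ε / 2)) :=
      Real.continuous_mul_log.comp_continuousOn hQcont
    have : ContinuousOn (fun x => Real.log (∑ t ∈ range (κ + 1), Q x ^ t) -
        (1 + Q x + Q x ^ 2 * E (Q x)) * (Q x * Real.log (Q x))) (Set.Icc 0 (P ε / 2)) := by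
      exact hlog.sub (((continuousOn_const.add hQcont).add ((hQcont.pow 2).mul hEc)).mul hql)
    refine this.congr fun x hx => ?_
    have hPx : Q x + Q x ^ 2 + Q x ^ 3 * E (Q x) = x := (hQmem x (hIcc x hx)).2
    rw [hHeq x (hIcc x hx)]
    nth_rewrite 2 [← hPx]
    ring
  · intro x hx
    have hx' := hIoo x hx
    have hq := hQIoo x hx'
    have hxI : x ∈ Set.Icc 0 (P ε) := ⟨hx'.1.le, hx'.2.le⟩
    have hS := hSpos _ hq.1.le
    have hPx : tgMean (κ : ℕ∞) (Q x) = x := (hME _ hq.1.le).trans (hQmem x hxI).2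
    simp only [tgMean, ENat.natCast_ne_top, if_false, ENat.toNat_natCast] at hPx
    rw [div_eq_iff hS.ne'] at hPx
    have hD := (hprop (Q x) ⟨hq.1.le, hq.2.le⟩).1
    have hSder : HasDerivAt (fun q : ℝ => ∑ t ∈ range (κ + 1), q ^ t)
        ((∑ t ∈ range (κ + 1), (t : ℝ) * Q x ^ t) / Q x) (Q x) := by
      rw [Finset.sum_div]
      refine HasDerivAt.fun_sum fun t _ => (hasDerivAt_pow t (Q x)).congr_deriv ?_
      rcases t with _ | t
      · simp
      · rw [Nat.add_sub_cancel, pow_succ]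
        field_simp [hq.1.ne']
    have hder := ((hSder.comp x (hQder x hx')).log hS.ne').fun_sub
      ((hasDerivAt_id x).fun_mul ((hQder x hx').log hq.1.ne'))
    refine (hder.congr_deriv ?_).congr_of_eventuallyEq ?_
    · rw [hPx]
      have := hq.1.ne'
      simp only [id, Function.comp_apply]
      field_simp
      ring
    · filter_upwards [Icc_mem_nhds hx'.1 hx'.2] with y hy using hHeq y hy
  · intro x hx
    exact ((hQder x (hIoo x hx)).log (hQIoo x (hIoo x hx)).1.ne').fun_neg
  · have hkder : ∀ x ∈ Set.Ioo 0 (P ε / 2), HasDerivAt (fun x => k (Q x)) (L (Q x)) x := by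
      intro x hx
      have hq := hQIoo x (hIoo x hx)
      have h := hprop (Q x) ⟨hq.1.le, hq.2.le⟩
      refine (h.2.2.1.comp x (hQder x (hIoo x hx))).congr_deriv ?_
      rw [mul_assoc, mul_inv_cancel₀ h.1.ne', mul_one]
    refine StrictMonoOn.strictConvexOn_of_deriv (convex_Icc _ _) ?_ ?_
    · exact fun x hx => (hprop (Q x) (hQmem x (hIcc x hx)).1).2.2.1.continuousAt
        |>.comp_continuousWithinAt (hQcont x hx)
    · rw [interior_Icc]
      intro x hx y hy hxy
      rw [(hkder x hx).deriv, (hkder y hy).deriv]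
      have hx' : x ∈ Set.Icc 0 (P ε) := ⟨hx.1.le, (hIoo x hx).2.le⟩
      have hy' : y ∈ Set.Icc 0 (P ε) := ⟨hy.1.le, (hIoo y hy).2.le⟩
      exact hL (hQmem x hx').1 (hQmem y hy').1 (hQmono hx' hy' hxy)
  · intro x hx
    have hq := hQIoo x (hIoo x hx)
    have h := hprop (Q x) ⟨hq.1.le, hq.2.le⟩
    have hPx : Q x + Q x ^ 2 + Q x ^ 3 * E (Q x) = x :=
      (hQmem x ⟨hx.1.le, (hIoo x hx).2.le⟩).2
    have hk := h.2.2.2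
    rw [hPx] at hk
    have h1 := h.1.ne'
    have h2 := hq.1.ne'
    rw [← eq_div_iff (mul_ne_zero h2 h1)] at hk
    simp only [hk]
    field_simp

/-- **Key inequality for Theorem 4.** For `κ ≥ 2` there is `δ = δ(κ) ∈ (0,1)` such that
for sparse margins the entropy-loss inequality holds, strictly when neither margin is
constant. -/
theorem entropyLoss_inequality (κ : ℕ) (hκ : 2 ≤ κ) :
    ∃ δ : ℝ, δ ∈ Set.Ioo (0 : ℝ) 1 ∧
      ∀ (m n : ℕ) (R : Fin m → ℕ) (C : Fin n → ℕ) (N : ℕ),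
        ∑ i, R i = N → ∑ j, C j = N → 0 < N →
        (⨆ i, (R i : ℝ)) * (⨆ j, (C j : ℝ)) < δ * κ * N →
        ((n : ℝ) * ∑ i, Hmax (κ : ℕ∞) ((R i : ℝ) / n) -
            ∑ i, ∑ j, Hmax (κ : ℕ∞) ((R i : ℝ) * (C j : ℝ) / N) ≤
          (m : ℝ) * n * Hmax (κ : ℕ∞) ((N : ℝ) / (m * n)) -
            (m : ℝ) * ∑ j, Hmax (κ : ℕ∞) ((C j : ℝ) / m)) ∧
        ((¬ ∀ i i', R i = R i') → (¬ ∀ j j', C j = C j') →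
          (n : ℝ) * ∑ i, Hmax (κ : ℕ∞) ((R i : ℝ) / n) -
            ∑ i, ∑ j, Hmax (κ : ℕ∞) ((R i : ℝ) * (C j : ℝ) / N) <
          (m : ℝ) * n * Hmax (κ : ℕ∞) ((N : ℝ) / (m * n)) -
            (m : ℝ) * ∑ j, Hmax (κ : ℕ∞) ((C j : ℝ) / m)) := by
  obtain ⟨x₀, hx₀, H₁, H₂, h, hH, hH₁, hH₂, hh, hh0, hhH⟩ :=
    exists_strictConvexOn_sq_mul_deriv2_Hmax hκ
  have hκ' : (0 : ℝ) < κ := by exact_mod_cast (by omega : 0 < κ)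
  refine ⟨min (x₀ / κ) (1 / 2), ⟨lt_min (div_pos hx₀ hκ') (by norm_num),
    (min_le_right _ _).trans_lt (by norm_num)⟩, ?_⟩
  intro m n R C N hR hC hN hRC
  refine sum_dilation_inequality hH hH₁ hH₂ hh hh0 hhH hR hC hN (hRC.trans_le ?_)
  gcongr
  exact (mul_le_mul_of_nonneg_right (min_le_left _ _) hκ'.le).trans_eq
    (div_mul_cancel₀ _ hκ'.ne')
end
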